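/- Let 𝕏 = (X,Σ_X,𝔪_X) and 𝕐 = (Y,Σ_Y,𝔪_Y) be separable σ-finite measure spaces, and φ : X → Y a measurable map with φ_#𝔪_X ≪ 𝔪_Y. Let ℳ, 𝒩 be Banach L^0(𝕐)-modules. Then there is a unique homomorphism φ* : ℳ ⊗̂_ε 𝒩 → (φ*ℳ) ⊗̂_ε (φ*𝒩) with φ*(v ⊗ w) = (φ*v) ⊗ (φ*w) for all v ∈ ℳ, w ∈ 𝒩; it satisfies |φ*α|_ε = |α|_ε ∘ φ for every α ∈ ℳ ⊗̂_ε 𝒩, and its image generates (φ*ℳ) ⊗̂_ε (φ*𝒩), so that ((φ*ℳ) ⊗̂_ε (φ*𝒩), φ*) is a realization of the pullback of ℳ ⊗̂_ε 𝒩; in particular φ*(ℳ ⊗̂_ε 𝒩) ≅ (φ*ℳ) ⊗̂_ε (φ*𝒩) as Banach L^0(𝕏)-modules. -/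

import Mathlib

open MeasureTheory Filter Set TensorProduct

noncomputable section

namespace Paper

variable {X : Type*} [MeasurableSpace X]

/-- The space `L⁰(𝕏)` of real-valued measurable functions up to `μ`-a.e. equality. -/
abbrev L0 (μ : Measure X) : Type _ := X →ₘ[μ] ℝ

instance (μ : Measure X) : CommRing (L0 μ) :=
  { (inferInstance : AddCommGroup (L0 μ)), (inferInstance : CommMonoid (L0 μ)) with
    left_distrib := fun a b c => AEEqFun.toGerm_injective <| by
      simp only [AEEqFun.mul_toGerm, AEEqFun.add_toGerm, mul_add]
    right_distrib := fun a b c => AEEqFun.toGerm_injective <| by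
      simp only [AEEqFun.mul_toGerm, AEEqFun.add_toGerm, add_mul]
    zero_mul := fun a => AEEqFun.toGerm_injective <| by
      simp only [AEEqFun.mul_toGerm, AEEqFun.zero_toGerm, zero_mul]
    mul_zero := fun a => AEEqFun.toGerm_injective <| by
      simp only [AEEqFun.mul_toGerm, AEEqFun.zero_toGerm, mul_zero] }

/-- The distance on `L⁰(𝕏)` inducing the topology of convergence in measure, defined through
the auxiliary finite measure `μ.toFinite` (which satisfies `μ ≪ μ.toFinite ≪ μ`). -/
noncomputable def dL0 (μ : Measure X) [SFinite μ] (f g : L0 μ) : ℝ :=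
  ∫ x, min |f x - g x| 1 ∂(μ.toFinite)

/-- A Banach `L⁰(𝕏)`-module: a module over `L⁰(𝕏)` endowed with a pointwise norm, complete
with respect to the induced distance. -/
class BanachMod (μ : Measure X) [SFinite μ] (M : Type*) [AddCommGroup M]
    [Module (L0 μ) M] where
  pn : M → L0 μ
  pn_nonneg : ∀ v : M, 0 ≤ pn v
  pn_eq_zero : ∀ v : M, pn v = 0 ↔ v = 0
  pn_add_le : ∀ v w : M, pn (v + w) ≤ pn v + pn w
  pn_smul : ∀ (f : L0 μ) (v : M), pn (f • v) = |f| * pn v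
  complete : ∀ u : ℕ → M,
    (∀ ε : ℝ, 0 < ε → ∃ N : ℕ, ∀ m ≥ N, ∀ n ≥ N, dL0 μ (pn (u m - u n)) 0 < ε) →
    ∃ v : M, Tendsto (fun n => dL0 μ (pn (u n - v)) 0) atTop (nhds 0)

/-- The pointwise norm of a Banach `L⁰(𝕏)`-module, with the measure explicit. -/
noncomputable def pn (μ : Measure X) [SFinite μ] {M : Type*} [AddCommGroup M]
    [Module (L0 μ) M] [BanachMod μ M] (v : M) : L0 μ :=
  BanachMod.pn v

/-- The distance on a Banach `L⁰(𝕏)`-module. -/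
noncomputable def dM (μ : Measure X) [SFinite μ] {M : Type*} [AddCommGroup M]
    [Module (L0 μ) M] [BanachMod μ M] (v w : M) : ℝ :=
  dL0 μ (pn μ (v - w)) 0

section Defs

variable (μ : Measure X) [SFinite μ]
variable {M N : Type*} [AddCommGroup M] [Module (L0 μ) M] [BanachMod μ M]
  [AddCommGroup N] [Module (L0 μ) N] [BanachMod μ N]

/-- The set of admissible bounds of a map between Banach `L⁰(𝕏)`-modules; the pointwise norm
`|T|` of a homomorphism is the infimum of this set. -/
def homBddSet (T : M → N) : Set (L0 μ) :=
  {g | 0 ≤ g ∧ ∀ v, pn μ (T v) ≤ g * pn μ v}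

/-- A homomorphism of Banach `L⁰(𝕏)`-modules: an `L⁰(𝕏)`-linear map admitting a bound
`g ∈ L⁰(𝕏)⁺` with `|T v| ≤ g |v|` (equivalently, `L⁰(𝕏)`-linear and continuous). -/
def IsHom (T : M →ₗ[L0 μ] N) : Prop :=
  ∃ g, g ∈ homBddSet μ (⇑T)

/-- The set of admissible bounds of an `L⁰(𝕏)`-valued map (for elements of the dual module). -/
def dualBddSet (ω : M → L0 μ) : Set (L0 μ) :=
  {g | 0 ≤ g ∧ ∀ v, |ω v| ≤ g * pn μ v}

/-- Membership in the dual module `ℳ*`: an `L⁰(𝕏)`-linear map `ω : ℳ → L⁰(𝕏)` admitting a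
bound `g ∈ L⁰(𝕏)⁺` with `|ω v| ≤ g |v|`. -/
def IsDual (ω : M →ₗ[L0 μ] L0 μ) : Prop :=
  ∃ g, g ∈ dualBddSet μ (⇑ω)

/-- Membership in the unit disc `𝔻_{ℳ*}` of the dual module: `|ω| ≤ 1`, equivalently
`|ω v| ≤ |v|` for every `v`. -/
def InDualDisc (ω : M →ₗ[L0 μ] L0 μ) : Prop :=
  ∀ v, |ω v| ≤ pn μ v

/-- The family of pointwise norms `|s - ∑_{i ∈ F ∪ G} v i|` for `G` finite disjoint from `F`,
whose `F`-indexed inf-sup being `0` defines `s = ∑_{i∈I} v i`. -/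
def sumUB {I : Type*} (v : I → M) (s : M) (F : Finset I) : Set (L0 μ) :=
  {g | ∃ G : Finset I, Disjoint G F ∧ g = pn μ (s - (∑ i ∈ F, v i + ∑ i ∈ G, v i))}

/-- `HasSumMod μ v s` means that the family `{v_i}` is summable in the Banach `L⁰(𝕏)`-module
with sum `s`, i.e. `⋀_F ⋁_G |s - ∑_{i ∈ F ∪ G} v_i| = 0` (the inner suprema being the values
of `b`, and the outer infimum being `0`). -/
def HasSumMod {I : Type*} (v : I → M) (s : M) : Prop :=
  ∃ b : Finset I → L0 μ, (∀ F, IsLUB (sumUB μ v s F) (b F)) ∧ IsGLB (Set.range b) 0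

/-- A family in a Banach `L⁰(𝕏)`-module is summable if it has a sum. -/
def SummableMod {I : Type*} (v : I → M) : Prop :=
  ∃ s, HasSumMod μ v s

/-- The partial sums `∑_{i ∈ F} |v i|` of the pointwise norms of a family; the element `|v|₁`
of `ℓ₁(I, ℳ)` is the supremum of this set. -/
def l1PartialSums {I : Type*} (v : I → M) : Set (L0 μ) :=
  {g | ∃ F : Finset I, g = ∑ i ∈ F, pn μ (v i)}

/-- Membership in `ℓ₁(I, ℳ)`: the partial sums of the pointwise norms admit a supremum
(equivalently, an upper bound) in `L⁰(𝕏)`. -/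
def Meml1 {I : Type*} (v : I → M) : Prop :=
  ∃ b, IsLUB (l1PartialSums μ v) b

/-- The partial sums `∑_{i ∈ F} |v i|` for an `L⁰(𝕏)`-valued family. -/
def l1PartialSumsF {I : Type*} (v : I → L0 μ) : Set (L0 μ) :=
  {g | ∃ F : Finset I, g = ∑ i ∈ F, |v i|}

/-- Membership in `ℓ₁(I, L⁰(𝕏))`. -/
def Meml1F {I : Type*} (v : I → L0 μ) : Prop :=
  ∃ b, IsLUB (l1PartialSumsF μ v) b

/-- The set whose infimum defines the projective pointwise norm: all values
`∑_{i=1}^n |v_i||w_i|` over representations `α = ∑_{i=1}^n v_i ⊗ w_i`. -/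
def piReps (α : M ⊗[L0 μ] N) : Set (L0 μ) :=
  {g | ∃ (n : ℕ) (v : Fin n → M) (w : Fin n → N),
    α = ∑ i, v i ⊗ₜ[L0 μ] w i ∧ g = ∑ i, pn μ (v i) * pn μ (w i)}

/-- The set whose supremum defines the injective pointwise norm: all values
`|∑_{i=1}^n ω(v_i) η(w_i)|` over representations `α = ∑_{i=1}^n v_i ⊗ w_i` and elements
`ω ∈ 𝔻_{ℳ*}`, `η ∈ 𝔻_{𝒩*}`. -/
def epsReps (α : M ⊗[L0 μ] N) : Set (L0 μ) :=
  {g | ∃ (n : ℕ) (v : Fin n → M) (w : Fin n → N)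
    (ω : M →ₗ[L0 μ] L0 μ) (η : N →ₗ[L0 μ] L0 μ), InDualDisc μ ω ∧ InDualDisc μ η ∧
    α = ∑ i, v i ⊗ₜ[L0 μ] w i ∧ g = |∑ i, ω (v i) * η (w i)|}

/-- `IsPiTensor μ M N P e` states that the Banach `L⁰(𝕏)`-module `P`, together with the
`L⁰(𝕏)`-linear map `e` defined on the algebraic tensor product, realizes the projective
tensor product `ℳ ⊗̂_π 𝒩`: the pointwise norm of `e α` is the projective pointwise norm
`|α|_π` and the image of `e` is dense. -/
structure IsPiTensor (M N P : Type*) [AddCommGroup M] [Module (L0 μ) M] [BanachMod μ M]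
    [AddCommGroup N] [Module (L0 μ) N] [BanachMod μ N]
    [AddCommGroup P] [Module (L0 μ) P] [BanachMod μ P]
    (e : M ⊗[L0 μ] N →ₗ[L0 μ] P) : Prop where
  pn_emb : ∀ α : M ⊗[L0 μ] N, IsGLB (piReps μ α) (pn μ (e α))
  dense : ∀ p : P, ∀ ε : ℝ, 0 < ε → ∃ α : M ⊗[L0 μ] N, dM μ (e α) p < ε

/-- `IsEpsTensor μ M N P e` states that the Banach `L⁰(𝕏)`-module `P`, together with the
`L⁰(𝕏)`-linear map `e` defined on the algebraic tensor product, realizes the injective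
tensor product `ℳ ⊗̂_ε 𝒩`: the pointwise norm of `e α` is the injective pointwise norm
`|α|_ε` and the image of `e` is dense. -/
structure IsEpsTensor (M N P : Type*) [AddCommGroup M] [Module (L0 μ) M] [BanachMod μ M]
    [AddCommGroup N] [Module (L0 μ) N] [BanachMod μ N]
    [AddCommGroup P] [Module (L0 μ) P] [BanachMod μ P]
    (e : M ⊗[L0 μ] N →ₗ[L0 μ] P) : Prop where
  pn_emb : ∀ α : M ⊗[L0 μ] N, IsLUB (epsReps μ α) (pn μ (e α))
  dense : ∀ p : P, ∀ ε : ℝ, 0 < ε → ∃ α : M ⊗[L0 μ] N, dM μ (e α) p < ε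

end Defs

/-- A σ-finite measure space is separable: there is a sequence of measurable sets
approximating every finite-measure set in measure. -/
def MeasSeparable {Y : Type*} [MeasurableSpace Y] (ν : Measure Y) : Prop :=
  ∃ E : ℕ → Set Y, (∀ n, MeasurableSet (E n)) ∧
    ∀ F : Set Y, MeasurableSet F → ν F < ⊤ →
      ∀ ε : ENNReal, 0 < ε → ∃ n, ν (symmDiff (E n) F) < ε

/-- Composition with `φ`, as a map `L⁰(𝕐) → L⁰(𝕏)` (for `φ` with `φ_# μ ≪ ν`). -/
def pullL0 {Y : Type*} [MeasurableSpace Y] {μ : Measure X} {ν : Measure Y} {φ : X → Y}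
    (hφ : Measure.QuasiMeasurePreserving φ μ ν) (f : L0 ν) : L0 μ :=
  f.compQuasiMeasurePreserving φ hφ

/-- `(Mp, pb)` is a realization of the pullback `φ*ℳ` of the Banach `L⁰(𝕐)`-module `ℳ`:
`pb` is linear, `pb (f • v) = (f ∘ φ) • pb v`, `|pb v| = |v| ∘ φ`, and the `L⁰(𝕏)`-module
generated by the image of `pb` is dense in `Mp`. -/
structure IsPullback {Y : Type*} [MeasurableSpace Y] (μ : Measure X) [SFinite μ]
    (ν : Measure Y) [SFinite ν] (φ : X → Y) (hφ : Measure.QuasiMeasurePreserving φ μ ν)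
    (M : Type*) [AddCommGroup M] [Module (L0 ν) M] [BanachMod ν M]
    (Mp : Type*) [AddCommGroup Mp] [Module (L0 μ) Mp] [BanachMod μ Mp]
    (pb : M → Mp) : Prop where
  add : ∀ v w : M, pb (v + w) = pb v + pb w
  smul : ∀ (f : L0 ν) (v : M), pb (f • v) = pullL0 hφ f • pb v
  pnorm : ∀ v : M, pn μ (pb v) = pullL0 hφ (pn ν v)
  dense : ∀ u : Mp, ∀ ε : ℝ, 0 < ε →
    ∃ w ∈ Submodule.span (L0 μ) (Set.range pb), dM μ w u < ε

/-!
Everything follows from `|φ*α|_ε = |α|_ε ∘ φ` on the algebraic tensor product.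

* For `≥`, a functional on `ℳ` of norm at most `1` prescribes a functional on the submodule
  generated by `φ*ℳ`, and the Hahn–Banach theorem over `L⁰` extends it to the pullback.
* For `≤`, fix `α = ∑ vᵢ ⊗ wᵢ`. A functional `ω'` on the pullback need not come from `ℳ`, but only
  the vector `(ω'(φ*vᵢ))ᵢ` matters. At almost every `x` it lies in the closure of the vectors
  `(ω(vᵢ)(φ x))ᵢ`, where `ω` ranges over countably many functionals on `ℳ` chosen in advance:
  for each rational vector and each tolerance, a version of Helly's theorem over `L⁰` provides a
  functional which attains that vector within the tolerance wherever this is possible.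

A map with this isometry property extends uniquely to the completion, since a Cauchy sequence
subconverges almost everywhere and composition with `φ` preserves almost everywhere convergence.
-/

/-! ### `L⁰` as a lattice-ordered ring -/

section L0

variable {μ : Measure X}

instance (μ : Measure X) : IsOrderedRing (L0 μ) :=
  Function.Injective.isOrderedRing AEEqFun.toGerm AEEqFun.zero_toGerm AEEqFun.one_toGerm
    AEEqFun.add_toGerm AEEqFun.mul_toGerm Iff.rfl

theorem L0.const_nonneg {r : ℝ} (hr : 0 ≤ r) : (0 : L0 μ) ≤ AEEqFun.const X r :=
  (AEEqFun.mk_le_mk _ _).2 (ae_of_all μ fun _ => hr)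

theorem L0.coeFn_sum_mul {ι : Type*} (s : Finset ι) (f g : ι → L0 μ) :
    ⇑(∑ i ∈ s, f i * g i) =ᵐ[μ] fun x => ∑ i ∈ s, f i x * g i x := by
  refine (AEEqFun.coeFn_fun_finsetSum s fun i => f i * g i).trans ?_
  filter_upwards [(eventually_all_finset s).2 fun i _ =>
    AEEqFun.coeFn_mul (f i) (g i)] with x hx
  exact Finset.sum_congr rfl hx

protected theorem L0.abs_mul (f g : L0 μ) : |f * g| = |f| * |g| := by
  apply AEEqFun.ext
  filter_upwards [AEEqFun.coeFn_abs (f * g), AEEqFun.coeFn_mul f g, AEEqFun.coeFn_mul |f| |g|,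
    AEEqFun.coeFn_abs f, AEEqFun.coeFn_abs g] with x h₁ h₂ h₃ h₄ h₅
  simp only [h₁, h₂, h₃, h₄, h₅, Pi.mul_apply, abs_mul]

theorem L0.abs_of_isIdempotentElem {e : L0 μ} (he : IsIdempotentElem e) : |e| = e := by
  apply AEEqFun.ext
  have hsq := AEEqFun.coeFn_mul e e
  rw [he.eq] at hsq
  filter_upwards [hsq, AEEqFun.coeFn_abs e] with x hx habs
  rw [habs, abs_of_nonneg]
  exact hx ▸ mul_self_nonneg (e x)

theorem L0.exists_mul_mul_cancel (a : L0 μ) : ∃ b : L0 μ, a * b * a = a := by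
  refine ⟨a.compMeasurable Inv.inv measurable_inv, AEEqFun.ext ?_⟩
  filter_upwards [AEEqFun.coeFn_mul (a * a.compMeasurable _ measurable_inv) a,
    AEEqFun.coeFn_mul a (a.compMeasurable _ measurable_inv),
    AEEqFun.coeFn_compMeasurable _ measurable_inv a] with x h₁ h₂ h₃
  simp only [h₁, h₂, h₃, Pi.mul_apply, Function.comp_apply, mul_inv_mul_cancel]

/-- By density of `ℚ` in `ℝ`, at almost every point the coefficients `f i` may be replaced by
rational constants. -/
theorem L0.sum_mul_le_of_forall_rat {ι : Type*} [Fintype ι] {f s b : ι → L0 μ}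
    {A : L0 μ} (h : ∀ r : ι → ℚ, ∑ i, AEEqFun.const X (r i : ℝ) * s i ≤
      A + ∑ i, |AEEqFun.const X (r i : ℝ) - f i| * b i) :
    ∑ i, f i * s i ≤ A := by
  have rational : ∀ᵐ x ∂μ, ∀ r : ι → ℚ,
      ∑ i, (r i : ℝ) * s i x ≤ A x + ∑ i, |(r i : ℝ) - f i x| * b i x := by
    refine ae_all_iff.2 fun r => ?_
    filter_upwards [AEEqFun.coeFn_le.2 (h r),
      L0.coeFn_sum_mul Finset.univ (fun i => AEEqFun.const X (r i : ℝ)) s,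
      AEEqFun.coeFn_add A (∑ i, |AEEqFun.const X (r i : ℝ) - f i| * b i),
      L0.coeFn_sum_mul Finset.univ (fun i => |AEEqFun.const X (r i : ℝ) - f i|) b,
      ae_all_iff.2 fun i => AEEqFun.coeFn_const X (μ := μ) (r i : ℝ),
      ae_all_iff.2 fun i => AEEqFun.coeFn_abs (AEEqFun.const X (r i : ℝ) - f i),
      ae_all_iff.2 fun i => AEEqFun.coeFn_sub (AEEqFun.const X (r i : ℝ)) (f i)]
      with x hle hs hA hb hr habs hsub
    simpa only [hs, hA, Pi.add_apply, hb, hr, habs, hsub, Pi.sub_apply,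
      Function.const_apply] using hle
  rw [← AEEqFun.coeFn_le]
  filter_upwards [rational, L0.coeFn_sum_mul Finset.univ f s] with x hx hfs
  have real (r : ι → ℝ) : ∑ i, r i * s i x ≤ A x + ∑ i, |r i - f i x| * b i x := by
    exact (DenseRange.piMap fun _ : ι => Rat.denseRange_cast (𝕜 := ℝ)).induction_on
      (p := fun r : ι → ℝ => ∑ i, r i * s i x ≤ A x + ∑ i, |r i - f i x| * b i x) r
      (isClosed_le (by fun_prop) (by fun_prop)) hx
  simpa only [hfs, sub_self, abs_zero, zero_mul, Finset.sum_const_zero, add_zero]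
    using real fun i => f i x

end L0

section Suprema

variable {μ : Measure X} [SFinite μ]

theorem exists_countable_dominating (S : Set (L0 μ)) :
    ∃ J ⊆ S, J.Countable ∧ ∀ f ∈ S, ∀ᵐ x ∂μ, ∀ t : ℝ, (∀ g ∈ J, g x ≤ t) → f x ≤ t := by
  have level (q : ℚ) : ∃ K ⊆ S, K.Countable ∧
      ∀ f ∈ S, ∀ᵐ x ∂μ, (q : ℝ) < f x → ∃ g ∈ K, (q : ℝ) < g x := by
    obtain ⟨D, hDS, hDc, hD⟩ := μ.exists_ae_subset_biUnion_countable
      (C := (fun f : L0 μ => {x | (q : ℝ) < f x}) '' S)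
      (by rintro _ ⟨f, -, rfl⟩; exact measurableSet_lt measurable_const f.measurable)
    obtain ⟨K, hKS, hK⟩ := SurjOn.exists_bijOn_subset hDS
    refine ⟨K, hKS, countable_of_injective_of_countable_image hK.injOn (hK.image_eq ▸ hDc),
      fun f hf => ?_⟩
    filter_upwards [hD _ (mem_image_of_mem _ hf)] with x hx hqf
    obtain ⟨_, hs, hxs⟩ := hx hqf
    obtain ⟨g, hg, rfl⟩ := hK.surjOn hs
    exact ⟨g, hg, hxs⟩
  choose K hKS hKc hK using level
  refine ⟨⋃ q, K q, iUnion_subset hKS, countable_iUnion hKc, fun f hf => ?_⟩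
  filter_upwards [ae_all_iff.2 fun q => hK q f hf] with x hx t ht
  by_contra! htf
  obtain ⟨q, htq, hqf⟩ := exists_rat_btwn htf
  obtain ⟨g, hg, hqg⟩ := hx q hqf
  exact (htq.trans hqg).not_ge (ht g (mem_iUnion_of_mem q hg))

theorem exists_isLUB_seq {S : Set (L0 μ)} (hne : S.Nonempty) (hbdd : BddAbove S) :
    ∃ s, IsLUB S s ∧ ∃ u : ℕ → L0 μ, (∀ n, u n ∈ S) ∧
      ∀ᵐ x ∂μ, IsLUB (range fun n => u n x) (s x) := by
  obtain ⟨f₀, hf₀⟩ := hne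
  obtain ⟨J, hJS, hJc, hJ⟩ := exists_countable_dominating S
  obtain ⟨u, hu⟩ := (hJc.insert f₀).exists_eq_range (insert_nonempty f₀ J)
  have huS (n : ℕ) : u n ∈ S := insert_subset hf₀ hJS (hu ▸ mem_range_self n)
  let s : L0 μ := AEEqFun.mk (fun x => ⨆ n, u n x)
    (Measurable.iSup fun n => (u n).measurable).aestronglyMeasurable
  have hle {b : L0 μ} (hb : b ∈ upperBounds S) : ∀ᵐ x ∂μ, ∀ n, u n x ≤ b x :=
    ae_all_iff.2 fun n => AEEqFun.coeFn_le.2 (hb (huS n))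
  have hs : ∀ᵐ x ∂μ, IsLUB (range fun n => u n x) (s x) := by
    obtain ⟨b, hb⟩ := hbdd
    filter_upwards [hle hb, AEEqFun.coeFn_mk _
      (Measurable.iSup fun n => (u n).measurable).aestronglyMeasurable] with x hx hsx
    rw [hsx]
    exact isLUB_ciSup ⟨b x, forall_mem_range.2 hx⟩
  refine ⟨s, ⟨fun f hf => AEEqFun.coeFn_le.1 ?_, fun b hb => AEEqFun.coeFn_le.1 ?_⟩, u, huS, hs⟩
  · filter_upwards [hJ f hf, hs] with x hx hsx
    refine hx _ fun g hg => ?_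
    obtain ⟨n, rfl⟩ : g ∈ range u := hu ▸ mem_insert_of_mem f₀ hg
    exact hsx.1 (mem_range_self n)
  · filter_upwards [hle hb, hs] with x hx hsx
    exact hsx.2 (forall_mem_range.2 hx)

end Suprema

/-! ### The Hahn–Banach theorem over `L⁰` -/

section HahnBanach

variable {μ : Measure X} {V : Type*} [AddCommGroup V] [Module (L0 μ) V] {p : V → L0 μ}

/-- A seminorm with values in `L⁰`, homogeneous with respect to scalars in `L⁰`. -/
structure IsPointwiseSeminorm (p : V → L0 μ) : Prop where
  add_le : ∀ v w, p (v + w) ≤ p v + p w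
  smul : ∀ (f : L0 μ) v, p (f • v) = |f| * p v

/-- A partially defined functional on `V`, encoded by its graph, that lies below `p`.
When `p` is a pointwise seminorm this forces the relation `G` to be single-valued. -/
def IsDominatedGraph (p : V → L0 μ) (G : Submodule (L0 μ) (V × L0 μ)) : Prop :=
  ∀ z ∈ G, z.2 ≤ p z.1

namespace IsPointwiseSeminorm

theorem map_zero (hp : IsPointwiseSeminorm p) : p 0 = 0 := by
  rw [← zero_smul (L0 μ) 0, hp.smul, abs_zero, zero_mul]

theorem map_neg (hp : IsPointwiseSeminorm p) (v : V) : p (-v) = p v := by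
  rw [← neg_one_smul (L0 μ) v, hp.smul, abs_neg, L0.abs_of_isIdempotentElem .one, one_mul]

theorem map_smul_of_isIdempotentElem (hp : IsPointwiseSeminorm p) {e : L0 μ}
    (he : IsIdempotentElem e) (v : V) : p (e • v) = e * p v := by
  rw [hp.smul, L0.abs_of_isIdempotentElem he]

theorem map_sub_rev (hp : IsPointwiseSeminorm p) (v w : V) : p (v - w) = p (w - v) := by
  rw [← hp.map_neg, neg_sub]

theorem sub_le_add_sub (hp : IsPointwiseSeminorm p) (u v w : V) :
    p (u - w) ≤ p (u - v) + p (v - w) :=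
  sub_add_sub_cancel u v w ▸ hp.add_le (u - v) (v - w)

theorem abs_sub_le (hp : IsPointwiseSeminorm p) (v w : V) : |p v - p w| ≤ p (v - w) := by
  have bound (v w : V) : p v - p w ≤ p (v - w) :=
    sub_le_iff_le_add.2 (by simpa only [sub_add_cancel] using hp.add_le (v - w) w)
  exact sup_le (bound v w) (by rw [neg_sub, hp.map_sub_rev]; exact bound w v)

theorem sum_le (hp : IsPointwiseSeminorm p) {ι : Type*} (s : Finset ι) (v : ι → V) :
    p (∑ i ∈ s, v i) ≤ ∑ i ∈ s, p (v i) :=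
  Finset.le_sum_of_subadditive p hp.map_zero.le hp.add_le s v

end IsPointwiseSeminorm

namespace IsDominatedGraph

variable {G : Submodule (L0 μ) (V × L0 μ)}

theorem abs_le (hG : IsDominatedGraph p G) (hp : IsPointwiseSeminorm p) {z : V × L0 μ}
    (hz : z ∈ G) : |z.2| ≤ p z.1 :=
  sup_le (hG z hz) (hp.map_neg z.1 ▸ hG (-z) (G.neg_mem hz))

theorem exists_abs_add_le [SFinite μ] (hG : IsDominatedGraph p G) (hp : IsPointwiseSeminorm p)
    (v : V) : ∃ c : L0 μ, ∀ z ∈ G, |c + z.2| ≤ p (z.1 + v) := by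
  let S : Set (L0 μ) := (fun z : V × L0 μ => z.2 - p (z.1 - v)) '' G
  have upper : ∀ z ∈ G, p (z.1 + v) - z.2 ∈ upperBounds S := by
    rintro z hz _ ⟨z', hz', rfl⟩
    rw [sub_le_iff_le_add, sub_add_eq_add_sub, le_sub_iff_add_le]
    calc z'.2 + z.2 ≤ p (z'.1 + z.1) := hG _ (G.add_mem hz' hz)
      _ = p (z.1 + v + (z'.1 - v)) := by congr 1; abel
      _ ≤ p (z.1 + v) + p (z'.1 - v) := hp.add_le _ _
  obtain ⟨c, hc, -⟩ := exists_isLUB_seq (S := S) ⟨_, 0, G.zero_mem, rfl⟩ ⟨_, upper 0 G.zero_mem⟩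
  refine ⟨c, fun z hz => sup_le (le_sub_iff_add_le.1 (hc.2 (upper z hz))) ?_⟩
  have lower : -z.2 - p (-z.1 - v) ≤ c := hc.1 ⟨-z, G.neg_mem hz, rfl⟩
  rw [← neg_add' z.1 v, hp.map_neg] at lower
  calc -(c + z.2) = -z.2 - c := by abel
    _ ≤ p (z.1 + v) := sub_le_comm.1 lower

/-- Division by `a` is only available up to an idempotent: with `a * b * a = a`, the estimate for
`a • (b • z + (v, c))` controls the part of the claim on the support `e = a * b` of `a`, and
`z ∈ G` controls the part on its complement. -/
theorem exists_extension_step [SFinite μ] (hG : IsDominatedGraph p G)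
    (hp : IsPointwiseSeminorm p) (v : V) :
    ∃ c : L0 μ, IsDominatedGraph p (G ⊔ Submodule.span (L0 μ) {(v, c)}) := by
  obtain ⟨c, hc⟩ := hG.exists_abs_add_le hp v
  refine ⟨c, fun w hw => ?_⟩
  obtain ⟨z, hz, y, hy, rfl⟩ := Submodule.mem_sup.1 hw
  obtain ⟨a, rfl⟩ := Submodule.mem_span_singleton.1 hy
  obtain ⟨b, hb⟩ := L0.exists_mul_mul_cancel a
  have idem : IsIdempotentElem (a * b) := by rw [IsIdempotentElem, ← mul_assoc, hb]
  have hbz : |c + b * z.2| ≤ p (b • z.1 + v) := hc (b • z) (G.smul_mem b hz)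
  have onSupport : a * c + a * b * z.2 ≤ a * b * p (z.1 + a • v) :=
    calc a * c + a * b * z.2 = a * (c + b * z.2) := by rw [mul_add, mul_assoc]
      _ ≤ |a * (c + b * z.2)| := le_abs_self _
      _ = |a| * |c + b * z.2| := L0.abs_mul a _
      _ ≤ |a| * p (b • z.1 + v) :=
        mul_le_mul_of_nonneg_left hbz (abs_nonneg a)
      _ = p ((a * b) • (z.1 + a • v)) := by
        rw [← hp.smul, smul_add, smul_add, smul_smul, smul_smul, hb]
      _ = a * b * p (z.1 + a • v) := hp.map_smul_of_isIdempotentElem idem _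
  have offSupport : (1 - a * b) * z.2 ≤ (1 - a * b) * p (z.1 + a • v) :=
    calc (1 - a * b) * z.2 ≤ p ((1 - a * b) • z.1) := hG _ (G.smul_mem (1 - a * b) hz)
      _ = p ((1 - a * b) • (z.1 + a • v)) := by
        rw [smul_add, smul_smul, sub_mul, one_mul, hb, sub_self, zero_smul, add_zero]
      _ = (1 - a * b) * p (z.1 + a • v) := hp.map_smul_of_isIdempotentElem idem.one_sub _
  calc z.2 + a * c = (a * c + a * b * z.2) + (1 - a * b) * z.2 := by ring
    _ ≤ a * b * p (z.1 + a • v) + (1 - a * b) * p (z.1 + a • v) := add_le_add onSupport offSupport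
    _ = p (z.1 + a • v) := by rw [← add_mul, add_sub_cancel, one_mul]

theorem exists_maximal (hG : IsDominatedGraph p G) :
    ∃ H, G ≤ H ∧ Maximal (IsDominatedGraph p) H :=
  zorn_le_nonempty₀ {H | IsDominatedGraph p H}
    (fun c hc hchain H hH => ⟨sSup c, fun z hz => by
      obtain ⟨K, hK, hzK⟩ := (Submodule.mem_sSup_of_directed ⟨H, hH⟩ hchain.directedOn).1 hz
      exact hc hK z hzK, fun K hK => le_sSup hK⟩) G hG

theorem exists_extension [SFinite μ] (hG : IsDominatedGraph p G) (hp : IsPointwiseSeminorm p) :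
    ∃ F : V →ₗ[L0 μ] L0 μ, (∀ v, |F v| ≤ p v) ∧ ∀ z ∈ G, F z.1 = z.2 := by
  obtain ⟨H, hGH, hH⟩ := hG.exists_maximal
  have total (v : V) : ∃ c, (v, c) ∈ H := by
    obtain ⟨c, hc⟩ := hH.prop.exists_extension_step hp v
    exact ⟨c, hH.le_of_ge hc le_sup_left
      ((le_sup_right : _ ≤ H ⊔ _) (Submodule.mem_span_singleton_self _))⟩
  have injective : Function.Injective (Prod.fst ∘ H.subtype) := by
    rintro ⟨z, hz⟩ ⟨z', hz'⟩ (h : z.1 = z'.1)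
    have hle : |(z - z').2| ≤ p (z - z').1 := hH.prop.abs_le hp (H.sub_mem hz hz')
    rw [Prod.fst_sub, h, sub_self, hp.map_zero] at hle
    have hzero : (z - z').2 = 0 :=
      le_antisymm ((le_abs_self _).trans hle) (neg_nonpos.1 ((neg_le_abs _).trans hle))
    exact Subtype.ext (Prod.ext h (sub_eq_zero.1 hzero))
  obtain ⟨F, rfl⟩ := Submodule.exists_eq_graph ⟨injective,
    fun v => ⟨⟨_, (total v).choose_spec⟩, rfl⟩⟩
  exact ⟨F, fun v => hH.prop.abs_le hp ((F.mem_graph_iff (v, F v)).2 rfl),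
    fun z hz => (hGH hz).symm⟩

end IsDominatedGraph

end HahnBanach

section PointwiseNorm

variable {μ : Measure X} [SFinite μ] {M : Type*} [AddCommGroup M] [Module (L0 μ) M]
  [BanachMod μ M]

theorem isPointwiseSeminorm_pn : IsPointwiseSeminorm (pn μ : M → L0 μ) :=
  ⟨BanachMod.pn_add_le, BanachMod.pn_smul⟩

theorem pn_nonneg (v : M) : 0 ≤ pn μ v :=
  BanachMod.pn_nonneg v

theorem pn_zero : pn μ (0 : M) = 0 :=
  isPointwiseSeminorm_pn.map_zero

end PointwiseNorm

/-! ### Composition with `φ` -/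

section Pull

variable {Y : Type*} [MeasurableSpace Y] {μ : Measure X} {ν : Measure Y} {φ : X → Y}
  (hφ : Measure.QuasiMeasurePreserving φ μ ν)

theorem coeFn_pullL0 (f : L0 ν) : pullL0 hφ f =ᵐ[μ] f ∘ φ :=
  f.coeFn_compQuasiMeasurePreserving hφ

/-- `pullL0` as a ring homomorphism, so that pullback maps are semilinear maps over it. -/
def pullRingHom : L0 ν →+* L0 μ where
  toFun := pullL0 hφ
  map_one' := rfl
  map_mul' f g := by
    apply AEEqFun.ext
    filter_upwards [coeFn_pullL0 hφ (f * g), hφ.ae (AEEqFun.coeFn_mul f g), coeFn_pullL0 hφ f,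
      coeFn_pullL0 hφ g, AEEqFun.coeFn_mul (pullL0 hφ f) (pullL0 hφ g)] with x h₁ h₂ h₃ h₄ h₅
    simp only [h₁, h₂, h₃, h₄, h₅, Function.comp_apply, Pi.mul_apply]
  map_zero' := rfl
  map_add' f g := by
    apply AEEqFun.ext
    filter_upwards [coeFn_pullL0 hφ (f + g), hφ.ae (AEEqFun.coeFn_add f g), coeFn_pullL0 hφ f,
      coeFn_pullL0 hφ g, AEEqFun.coeFn_add (pullL0 hφ f) (pullL0 hφ g)] with x h₁ h₂ h₃ h₄ h₅
    simp only [h₁, h₂, h₃, h₄, h₅, Function.comp_apply, Pi.add_apply]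

theorem pullL0_id (f : L0 μ) : pullL0 (.id μ) f = f :=
  AEEqFun.ext (coeFn_pullL0 (.id μ) f)

theorem pullL0_mono : Monotone (pullL0 hφ) := by
  intro f g hfg
  rw [← AEEqFun.coeFn_le]
  filter_upwards [coeFn_pullL0 hφ f, coeFn_pullL0 hφ g, hφ.ae (AEEqFun.coeFn_le.2 hfg)]
    with x hf hg hx
  simpa only [hf, hg, Function.comp_apply] using hx

theorem pullL0_abs (f : L0 ν) : pullL0 hφ |f| = |pullL0 hφ f| := by
  apply AEEqFun.ext
  filter_upwards [coeFn_pullL0 hφ |f|, hφ.ae (AEEqFun.coeFn_abs f), coeFn_pullL0 hφ f,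
    AEEqFun.coeFn_abs (pullL0 hφ f)] with x h₁ h₂ h₃ h₄
  simp only [h₁, h₂, h₃, h₄, Function.comp_apply]

theorem pullL0_sub (f g : L0 ν) : pullL0 hφ (f - g) = pullL0 hφ f - pullL0 hφ g :=
  map_sub (pullRingHom hφ) f g

theorem isLUB_pullL0_image [SFinite ν] {S : Set (L0 ν)} {s : L0 ν} (hne : S.Nonempty)
    (hs : IsLUB S s) : IsLUB (pullL0 hφ '' S) (pullL0 hφ s) := by
  refine ⟨(pullL0_mono hφ).mem_upperBounds_image hs.1, fun c hc => AEEqFun.coeFn_le.1 ?_⟩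
  obtain ⟨s', hs', u, huS, hu⟩ := exists_isLUB_seq hne ⟨s, hs.1⟩
  obtain rfl := hs'.unique hs
  have huc (n : ℕ) : ∀ᵐ x ∂μ, u n (φ x) ≤ c x := by
    filter_upwards [coeFn_pullL0 hφ (u n), AEEqFun.coeFn_le.2 (hc (mem_image_of_mem _ (huS n)))]
      with x hx hle
    rwa [hx] at hle
  filter_upwards [ae_all_iff.2 huc, hφ.ae hu, coeFn_pullL0 hφ s'] with x hle hlub hx
  exact hx ▸ hlub.2 (forall_mem_range.2 hle)

end Pull

/-! ### Pulling back functionals -/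

section PullFunctional

variable {Y : Type*} [MeasurableSpace Y] {μ : Measure X} [SFinite μ] {ν : Measure Y} [SFinite ν]
  {φ : X → Y} {hφ : Measure.QuasiMeasurePreserving φ μ ν}
  {M : Type*} [AddCommGroup M] [Module (L0 ν) M] [BanachMod ν M]
  {Mp : Type*} [AddCommGroup Mp] [Module (L0 μ) Mp] [BanachMod μ Mp] {pb : M → Mp}

/-- The pullback map as a semilinear map over composition with `φ`. -/
def IsPullback.toSemilinearMap (hpb : IsPullback μ ν φ hφ M Mp pb) :
    M →ₛₗ[pullRingHom hφ] Mp where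
  toFun := pb
  map_add' := hpb.add
  map_smul' := hpb.smul

namespace IsPullback

theorem sum_mul_pullL0_le (hpb : IsPullback μ ν φ hφ M Mp pb) {ω : M →ₗ[L0 ν] L0 ν}
    (hω : InDualDisc ν ω) {ι : Type*} [Fintype ι] (f : ι → L0 μ) (v : ι → M) :
    ∑ i, f i * pullL0 hφ (ω (v i)) ≤ pn μ (∑ i, f i • pb (v i)) := by
  refine L0.sum_mul_le_of_forall_rat (b := fun i => pn μ (pb (v i))) fun r => ?_
  let c (i : ι) : L0 ν := AEEqFun.const Y (r i : ℝ)
  calc ∑ i, AEEqFun.const X (r i : ℝ) * pullL0 hφ (ω (v i))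
      = pullRingHom hφ (ω (∑ i, c i • v i)) := by
        simp only [map_sum, map_smul, smul_eq_mul, map_mul]; rfl
    _ ≤ pullL0 hφ (pn ν (∑ i, c i • v i)) :=
        pullL0_mono hφ ((le_abs_self _).trans (hω _))
    _ = pn μ (hpb.toSemilinearMap (∑ i, c i • v i)) := (hpb.pnorm _).symm
    _ = pn μ (∑ i, f i • pb (v i) + ∑ i, (AEEqFun.const X (r i : ℝ) - f i) • pb (v i)) := by
        simp only [map_sum, map_smulₛₗ, sub_smul, Finset.sum_sub_distrib, add_sub_cancel]; rfl
    _ ≤ pn μ (∑ i, f i • pb (v i)) +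
          ∑ i, pn μ ((AEEqFun.const X (r i : ℝ) - f i) • pb (v i)) :=
        (isPointwiseSeminorm_pn.add_le _ _).trans
          (add_le_add_right (isPointwiseSeminorm_pn.sum_le _ _) _)
    _ = _ := by simp only [isPointwiseSeminorm_pn.smul]

theorem exists_functional (hpb : IsPullback μ ν φ hφ M Mp pb) {ω : M →ₗ[L0 ν] L0 ν}
    (hω : InDualDisc ν ω) :
    ∃ ω' : Mp →ₗ[L0 μ] L0 μ, InDualDisc μ ω' ∧ ∀ v, ω' (pb v) = pullL0 hφ (ω v) := by
  let g (v : M) : Mp × L0 μ := (pb v, pullL0 hφ (ω v))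
  have dominated : IsDominatedGraph (pn μ) (Submodule.span (L0 μ) (range g)) := by
    intro z hz
    obtain ⟨n, f, w, rfl⟩ := Submodule.mem_span_set'.1 hz
    choose v hv using fun i => (w i).2
    simpa only [← hv, g, Prod.fst_sum, Prod.snd_sum, Prod.smul_mk, smul_eq_mul]
      using hpb.sum_mul_pullL0_le hω f v
  obtain ⟨F, hF, hFg⟩ := dominated.exists_extension isPointwiseSeminorm_pn
  exact ⟨F, hF, fun v => hFg (g v) (Submodule.subset_span (mem_range_self v))⟩

end IsPullback

end PullFunctional

/-! ### Approximating functionals on a pullback -/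

section Interpolation

variable {ν : Measure X} [SFinite ν] {M : Type*} [AddCommGroup M] [Module (L0 ν) M]
  [BanachMod ν M] {ι : Type*} [Fintype ι]

/-- The amount by which the coefficients `a` violate the condition for the existence of a
functional in the dual unit disc whose value at `v i` is within `δ` of `s i`, for every `i`. -/
def interpolationDefect (v : ι → M) (s : ι → L0 ν) (δ : L0 ν) (a : ι → L0 ν) : L0 ν :=
  ∑ i, a i * s i - (pn ν (∑ i, a i • v i) + ∑ i, |a i| * δ)

theorem coeFn_interpolationDefect (v : ι → M) (s : ι → L0 ν) (δ : L0 ν) (a : ι → L0 ν) :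
    interpolationDefect v s δ a =ᵐ[ν] fun x =>
      ∑ i, a i x * s i x - (pn ν (∑ i, a i • v i) x + ∑ i, |a i x| * δ x) := by
  filter_upwards [
    AEEqFun.coeFn_sub (∑ i, a i * s i) (pn ν (∑ i, a i • v i) + ∑ i, |a i| * δ),
    AEEqFun.coeFn_add (pn ν (∑ i, a i • v i)) (∑ i, |a i| * δ),
    L0.coeFn_sum_mul Finset.univ a s, L0.coeFn_sum_mul Finset.univ (fun i => |a i|) fun _ => δ,
    ae_all_iff.2 fun i => AEEqFun.coeFn_abs (a i)] with x h₁ h₂ h₃ h₄ h₅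
  simp only [interpolationDefect, h₁, h₂, h₃, h₄, h₅, Pi.sub_apply, Pi.add_apply]

theorem isPointwiseSeminorm_pn_add_sum_abs_mul {δ : L0 ν} (hδ : 0 ≤ δ) :
    IsPointwiseSeminorm fun z : M × (ι → L0 ν) => pn ν z.1 + ∑ i, |z.2 i| * δ where
  add_le z z' := by
    calc pn ν (z.1 + z'.1) + ∑ i, |z.2 i + z'.2 i| * δ
        ≤ pn ν z.1 + pn ν z'.1 + ∑ i, (|z.2 i| + |z'.2 i|) * δ :=
          add_le_add (isPointwiseSeminorm_pn.add_le _ _) (Finset.sum_le_sum fun i _ =>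
            mul_le_mul_of_nonneg_right (abs_add_le (z.2 i) (z'.2 i)) hδ)
      _ = _ := by simp only [add_mul, Finset.sum_add_distrib]; abel
  smul f z := by
    simp only [Prod.smul_fst, Prod.smul_snd, Pi.smul_apply, smul_eq_mul,
      isPointwiseSeminorm_pn.smul, L0.abs_mul, mul_add, Finset.mul_sum, mul_assoc]

/-- Helly's theorem over `L⁰`: Hahn–Banach on `ℳ × L⁰^ι`, where the second factor, weighted
by `δ`, absorbs the error. -/
theorem exists_functional_abs_sub_le {v : ι → M} {s : ι → L0 ν} {δ : L0 ν} (hδ : 0 ≤ δ)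
    (h : ∀ a, interpolationDefect v s δ a ≤ 0) :
    ∃ ω : M →ₗ[L0 ν] L0 ν, InDualDisc ν ω ∧ ∀ i, |ω (v i) - s i| ≤ δ := by
  classical
  let G := LinearMap.range
    (((Fintype.linearCombination (L0 ν) v).prod .id).prod (Fintype.linearCombination (L0 ν) s))
  have dominated : IsDominatedGraph
      (fun z : M × (ι → L0 ν) => pn ν z.1 + ∑ i, |z.2 i| * δ) G := by
    rintro _ ⟨a, rfl⟩
    exact sub_nonpos.1 (h a)
  obtain ⟨F, hF, hFG⟩ := dominated.exists_extension (isPointwiseSeminorm_pn_add_sum_abs_mul hδ)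
  have hFv (i : ι) : F (v i, Pi.single i 1) = s i := by
    simpa [Fintype.linearCombination_apply_single] using hFG _ ⟨Pi.single i 1, rfl⟩
  refine ⟨F ∘ₗ LinearMap.inl (L0 ν) M (ι → L0 ν), fun w => ?_, fun i => ?_⟩
  · simpa using hF (w, 0)
  · have error : F (v i, 0) - s i = F (0, -Pi.single i 1) := by
      rw [← hFv i, ← map_sub, Prod.mk_sub_mk, sub_self, zero_sub]
    calc |F (v i, 0) - s i| ≤ pn ν (0 : M) + ∑ j, |(-Pi.single i 1 : ι → L0 ν) j| * δ :=
          error ▸ hF _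
      _ = δ := by
        rw [pn_zero, zero_add, Finset.sum_eq_single i (fun j _ hj => by simp [hj]) (by simp),
          Pi.neg_apply, Pi.single_eq_same, abs_neg, L0.abs_of_isIdempotentElem .one, one_mul]

end Interpolation

section Descent

variable {Y : Type*} [MeasurableSpace Y] {μ : Measure X} [SFinite μ] {ν : Measure Y} [SFinite ν]
  {φ : X → Y} {hφ : Measure.QuasiMeasurePreserving φ μ ν}
  {M : Type*} [AddCommGroup M] [Module (L0 ν) M] [BanachMod ν M]
  {Mp : Type*} [AddCommGroup Mp] [Module (L0 μ) Mp] [BanachMod μ Mp] {pb : M → Mp}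
  {ι : Type*} [Fintype ι]

/-- The target values `r` are cut off outside the set `B` where, up to a null set, no interpolation
condition for `r` is violated; countably many of these conditions suffice to describe `B`. -/
theorem exists_functional_abs_sub_le_on (v : ι → M) (r : ι → ℝ) {δ : ℝ} (hδ : 0 ≤ δ) :
    ∃ ω : M →ₗ[L0 ν] L0 ν, InDualDisc ν ω ∧
      ∃ J ⊆ range (interpolationDefect (ν := ν) v (fun i => .const Y (r i)) (.const Y δ)),
        J.Countable ∧ ∀ᵐ y ∂ν, (∀ g ∈ J, g y ≤ 0) → ∀ i, |ω (v i) y - r i| ≤ δ := by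
  obtain ⟨J, hJS, hJc, hJ⟩ := exists_countable_dominating
    (range (interpolationDefect (ν := ν) v (fun i => .const Y (r i)) (.const Y δ)))
  let B : Set Y := ⋂ g ∈ J, {y | g y ≤ 0}
  have hB : MeasurableSet B :=
    .biInter hJc fun g _ => measurableSet_le g.measurable measurable_const
  let s (i : ι) : L0 ν := AEEqFun.mk (B.indicator fun _ => r i)
    (measurable_const.indicator hB).aestronglyMeasurable
  have coeFn_s : ∀ᵐ y ∂ν, ∀ i, s i y = B.indicator (fun _ => r i) y :=
    ae_all_iff.2 fun i => AEEqFun.coeFn_mk _ _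
  have coeFn_δ := AEEqFun.coeFn_const Y (μ := ν) δ
  have defect_nonpos (a : ι → L0 ν) : interpolationDefect v s (AEEqFun.const Y δ) a ≤ 0 := by
    rw [← AEEqFun.coeFn_le]
    filter_upwards [coeFn_interpolationDefect v s (AEEqFun.const Y δ) a,
      coeFn_interpolationDefect v (fun i => AEEqFun.const Y (r i)) (AEEqFun.const Y δ) a,
      coeFn_s, hJ _ (mem_range_self a), coeFn_δ, AEEqFun.coeFn_zero (μ := ν) (β := ℝ),
      ae_all_iff.2 fun i => AEEqFun.coeFn_const Y (μ := ν) (r i),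
      AEEqFun.coeFn_le.2 (pn_nonneg (μ := ν) (∑ i, a i • v i))]
      with y hs hr hsy hdom hδy hzero hry hpn
    by_cases hy : y ∈ B
    · simpa only [hs, hr, hsy, hry, indicator_of_mem hy, hzero, Pi.zero_apply,
        Function.const_apply] using hdom 0 fun g hg => mem_iInter₂.1 hy g hg
    · rw [hzero, Pi.zero_apply] at hpn
      simp only [hs, hsy, indicator_of_notMem hy, mul_zero, Finset.sum_const_zero, hzero, hδy,
        Pi.zero_apply, Function.const_apply, zero_sub, neg_nonpos]
      positivity
  obtain ⟨ω, hω, hωs⟩ := exists_functional_abs_sub_le (L0.const_nonneg hδ) defect_nonpos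
  refine ⟨ω, hω, J, hJS, hJc, ?_⟩
  filter_upwards [ae_all_iff.2 fun i => AEEqFun.coeFn_le.2 (hωs i), coeFn_s, coeFn_δ,
    ae_all_iff.2 fun i => AEEqFun.coeFn_abs (ω (v i) - s i),
    ae_all_iff.2 fun i => AEEqFun.coeFn_sub (ω (v i)) (s i)] with y hle hsy hδy habs hsub hy i
  have hyB : y ∈ B := mem_iInter₂.2 hy
  simpa only [habs, hsub, Pi.sub_apply, hsy, indicator_of_mem hyB, hδy,
    Function.const_apply] using hle i

theorem IsPullback.interpolationDefect_nonpos (hpb : IsPullback μ ν φ hφ M Mp pb) (v : ι → M)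
    (r : ι → ℝ) (δ : ℝ) (a : ι → L0 ν) {ω' : Mp →ₗ[L0 μ] L0 μ} (hω' : InDualDisc μ ω') :
    ∀ᵐ x ∂μ, (∀ i, |ω' (pb (v i)) x - r i| ≤ δ) →
      interpolationDefect v (fun i => AEEqFun.const Y (r i)) (AEEqFun.const Y δ) a (φ x) ≤ 0 := by
  have bound : ∑ i, pullL0 hφ (a i) * ω' (pb (v i)) ≤ pullL0 hφ (pn ν (∑ i, a i • v i)) :=
    calc ∑ i, pullL0 hφ (a i) * ω' (pb (v i))
        = ω' (hpb.toSemilinearMap (∑ i, a i • v i)) := by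
          simp only [map_sum, map_smulₛₗ, smul_eq_mul]; rfl
      _ ≤ pn μ (pb (∑ i, a i • v i)) := (le_abs_self _).trans (hω' _)
      _ = pullL0 hφ (pn ν (∑ i, a i • v i)) := hpb.pnorm _
  filter_upwards [AEEqFun.coeFn_le.2 bound, coeFn_pullL0 hφ (pn ν (∑ i, a i • v i)),
    L0.coeFn_sum_mul Finset.univ (fun i => pullL0 hφ (a i)) fun i => ω' (pb (v i)),
    ae_all_iff.2 fun i => coeFn_pullL0 hφ (a i),
    hφ.ae (coeFn_interpolationDefect v (fun i => AEEqFun.const Y (r i)) (AEEqFun.const Y δ) a),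
    hφ.ae (AEEqFun.coeFn_const Y δ),
    ae_all_iff.2 fun i => hφ.ae (AEEqFun.coeFn_const Y (r i))]
    with x hle hpn hsum ha hdefect hδ hr hnear
  simp only [hsum, hpn, ha, Function.comp_apply] at hle
  simp only [hdefect, hδ, hr, Function.const_apply]
  have close : ∑ i, a i (φ x) * (r i - ω' (pb (v i)) x) ≤ ∑ i, |a i (φ x)| * δ := by
    refine Finset.sum_le_sum fun i _ => (le_abs_self _).trans ?_
    rw [abs_mul, abs_sub_comm]
    exact mul_le_mul_of_nonneg_left (hnear i) (abs_nonneg _)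
  simp only [mul_sub, Finset.sum_sub_distrib] at close
  linarith

/-- Functionals on the pullback need not be pulled back from `ℳ`; this is the substitute. One
functional on `ℳ` for each rational target vector and each tolerance `1 / (k + 1)` suffices. -/
theorem IsPullback.exists_countable_ae_mem_closure {κ : Type*} [Finite κ]
    (hpb : IsPullback μ ν φ hφ M Mp pb) (v : κ → M) :
    ∃ C : Set (M →ₗ[L0 ν] L0 ν), C.Countable ∧ (∀ ω ∈ C, InDualDisc ν ω) ∧
      ∀ ω' : Mp →ₗ[L0 μ] L0 μ, InDualDisc μ ω' → ∀ᵐ x ∂μ, (fun i => ω' (pb (v i)) x) ∈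
        closure ((fun (ω : M →ₗ[L0 ν] L0 ν) i => ω (v i) (φ x)) '' C) := by
  cases nonempty_fintype κ
  have hpos (k : ℕ) : (0 : ℝ) < 1 / (k + 1) := Nat.one_div_pos_of_nat
  choose ω hω J hJS hJc hJ using fun (c : (κ → ℚ) × ℕ) =>
    exists_functional_abs_sub_le_on (ν := ν) v (fun i => (c.1 i : ℝ)) (hpos c.2).le
  refine ⟨range ω, countable_range ω, forall_mem_range.2 hω, fun ω' hω' => ?_⟩
  have near : ∀ᵐ x ∂μ, ∀ c : (κ → ℚ) × ℕ, (∀ i, |ω' (pb (v i)) x - c.1 i| ≤ 1 / (c.2 + 1)) →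
      ∀ i, |ω c (v i) (φ x) - c.1 i| ≤ 1 / (c.2 + 1) := by
    refine ae_all_iff.2 fun c => ?_
    have hJx : ∀ᵐ x ∂μ, ∀ g ∈ J c, (∀ i, |ω' (pb (v i)) x - c.1 i| ≤ 1 / (c.2 + 1)) →
        g (φ x) ≤ 0 := by
      refine (ae_ball_iff (hJc c)).2 fun g hg => ?_
      obtain ⟨a, rfl⟩ := hJS c hg
      exact hpb.interpolationDefect_nonpos v _ _ a hω'
    filter_upwards [hJx, hφ.ae (hJ c)] with x hx hxJ hnear
    exact hxJ fun g hg => hx g hg hnear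
  filter_upwards [near] with x hx
  refine Metric.mem_closure_iff.2 fun ε hε => ?_
  obtain ⟨k, hk⟩ := exists_nat_one_div_lt (half_pos hε)
  choose r hr using fun i => exists_rat_near (ω' (pb (v i)) x) (hpos k)
  refine ⟨_, mem_image_of_mem _ (mem_range_self (r, k)), (dist_pi_lt_iff hε).2 fun i => ?_⟩
  have hωr := hx (r, k) (fun i => (hr i).le) i
  rw [Real.dist_eq]
  rw [abs_sub_comm] at hωr
  linarith [abs_sub_le (ω' (pb (v i)) x) (r i) (ω (r, k) (v i) (φ x)), hr i]

end Descent

/-! ### Isometry on the algebraic tensor product -/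

section InjectiveNorm

variable {μ : Measure X} [SFinite μ] {M N P : Type*}
  [AddCommGroup M] [Module (L0 μ) M] [BanachMod μ M]
  [AddCommGroup N] [Module (L0 μ) N] [BanachMod μ N]
  [AddCommGroup P] [Module (L0 μ) P] [BanachMod μ P]

theorem mem_epsReps {α : M ⊗[L0 μ] N} {g : L0 μ} :
    g ∈ epsReps μ α ↔ ∃ ω η, InDualDisc μ ω ∧ InDualDisc μ η ∧
      g = |dualDistrib (L0 μ) M N (ω ⊗ₜ η) α| := by
  constructor
  · rintro ⟨n, v, w, ω, η, hω, hη, rfl, rfl⟩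
    exact ⟨ω, η, hω, hη, by simp only [map_sum, dualDistrib_apply]⟩
  · rintro ⟨ω, η, hω, hη, rfl⟩
    obtain ⟨n, v, w, rfl⟩ := TensorProduct.exists_sum_tmul_eq α
    exact ⟨n, v, w, ω, η, hω, hη, rfl, by simp only [map_sum, dualDistrib_apply]⟩

theorem inDualDisc_zero : InDualDisc μ (0 : M →ₗ[L0 μ] L0 μ) := fun v =>
  (abs_zero (α := L0 μ)).trans_le (pn_nonneg v)

theorem epsReps_nonempty (α : M ⊗[L0 μ] N) : (epsReps μ α).Nonempty :=
  ⟨_, mem_epsReps.2 ⟨0, 0, inDualDisc_zero, inDualDisc_zero, rfl⟩⟩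

theorem IsEpsTensor.pn_tmul_le {e : M ⊗[L0 μ] N →ₗ[L0 μ] P} (he : IsEpsTensor μ M N P e)
    (v : M) (w : N) : pn μ (e (v ⊗ₜ w)) ≤ pn μ v * pn μ w := by
  refine (he.pn_emb _).2 fun g hg => ?_
  obtain ⟨ω, η, hω, hη, rfl⟩ := mem_epsReps.1 hg
  rw [dualDistrib_apply, L0.abs_mul]
  exact mul_le_mul (hω v) (hη w) (abs_nonneg _) (pn_nonneg v)

end InjectiveNorm

section Isometry

variable {Y : Type*} [MeasurableSpace Y] {μ : Measure X} [SFinite μ] {ν : Measure Y} [SFinite ν]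
  {φ : X → Y} {hφ : Measure.QuasiMeasurePreserving φ μ ν}
  {M : Type*} [AddCommGroup M] [Module (L0 ν) M] [BanachMod ν M]
  {N : Type*} [AddCommGroup N] [Module (L0 ν) N] [BanachMod ν N]
  {Mp : Type*} [AddCommGroup Mp] [Module (L0 μ) Mp] [BanachMod μ Mp]
  {Np : Type*} [AddCommGroup Np] [Module (L0 μ) Np] [BanachMod μ Np]
  {pbM : M → Mp} {pbN : N → Np}

/-- The map `v ⊗ w ↦ φ*v ⊗ φ*w` between the algebraic tensor products. -/
def tensorPull (hpbM : IsPullback μ ν φ hφ M Mp pbM) (hpbN : IsPullback μ ν φ hφ N Np pbN) :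
    M ⊗[L0 ν] N →ₛₗ[pullRingHom hφ] Mp ⊗[L0 μ] Np :=
  TensorProduct.map hpbM.toSemilinearMap hpbN.toSemilinearMap

variable (hpbM : IsPullback μ ν φ hφ M Mp pbM) (hpbN : IsPullback μ ν φ hφ N Np pbN)

theorem tensorPull_tmul (v : M) (w : N) :
    tensorPull hpbM hpbN (v ⊗ₜ w) = pbM v ⊗ₜ pbN w :=
  rfl

theorem dualDistrib_tensorPull {ω : M →ₗ[L0 ν] L0 ν} {η : N →ₗ[L0 ν] L0 ν}
    {ω' : Mp →ₗ[L0 μ] L0 μ} {η' : Np →ₗ[L0 μ] L0 μ}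
    (hω : ∀ v, ω' (pbM v) = pullL0 hφ (ω v)) (hη : ∀ w, η' (pbN w) = pullL0 hφ (η w))
    (α : M ⊗[L0 ν] N) :
    dualDistrib (L0 μ) Mp Np (ω' ⊗ₜ η') (tensorPull hpbM hpbN α) =
      pullL0 hφ (dualDistrib (L0 ν) M N (ω ⊗ₜ η) α) := by
  change _ = pullRingHom hφ _
  induction α with
  | zero => simp only [map_zero]
  | tmul v w =>
    rw [tensorPull_tmul, dualDistrib_apply, dualDistrib_apply, hω, hη, map_mul]
    rfl
  | add α β hα hβ => simp only [map_add, hα, hβ]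

theorem abs_dualDistrib_tensorPull_le {ω' : Mp →ₗ[L0 μ] L0 μ} {η' : Np →ₗ[L0 μ] L0 μ}
    (hω' : InDualDisc μ ω') (hη' : InDualDisc μ η') {α : M ⊗[L0 ν] N} {c : L0 ν}
    (hc : c ∈ upperBounds (epsReps ν α)) :
    |dualDistrib (L0 μ) Mp Np (ω' ⊗ₜ η') (tensorPull hpbM hpbN α)| ≤ pullL0 hφ c := by
  obtain ⟨n, v, w, rfl⟩ := TensorProduct.exists_sum_tmul_eq α
  obtain ⟨C, hCc, hC, hCω'⟩ := hpbM.exists_countable_ae_mem_closure v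
  obtain ⟨D, hDc, hD, hDη'⟩ := hpbN.exists_countable_ae_mem_closure w
  have bound (ω) (hω : ω ∈ C) (η) (hη : η ∈ D) :
      ∀ᵐ y ∂ν, |∑ i, ω (v i) y * η (w i) y| ≤ c y := by
    filter_upwards [AEEqFun.coeFn_le.2 (hc ⟨n, v, w, ω, η, hC ω hω, hD η hη, rfl, rfl⟩),
      AEEqFun.coeFn_abs (∑ i, ω (v i) * η (w i)),
      L0.coeFn_sum_mul Finset.univ (fun i => ω (v i)) fun i => η (w i)] with y hle habs hsum
    simpa only [habs, hsum] using hle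
  have bounds : ∀ᵐ x ∂μ, ∀ ω ∈ C, ∀ η ∈ D, |∑ i, ω (v i) (φ x) * η (w i) (φ x)| ≤ c (φ x) :=
    (ae_ball_iff hCc).2 fun ω hω => (ae_ball_iff hDc).2 fun η hη => hφ.ae (bound ω hω η hη)
  simp only [map_sum, tensorPull_tmul, dualDistrib_apply]
  rw [← AEEqFun.coeFn_le]
  filter_upwards [bounds, hCω' ω' hω', hDη' η' hη', coeFn_pullL0 hφ c,
    AEEqFun.coeFn_abs (∑ i, ω' (pbM (v i)) * η' (pbN (w i))),
    L0.coeFn_sum_mul Finset.univ (fun i => ω' (pbM (v i))) fun i => η' (pbN (w i))]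
    with x hle hs ht hcx habs hsum
  rw [habs, hsum, hcx, Function.comp_apply]
  have closed : IsClosed {z : (Fin n → ℝ) × (Fin n → ℝ) | |∑ i, z.1 i * z.2 i| ≤ c (φ x)} :=
    isClosed_le (by fun_prop) continuous_const
  refine closure_minimal ?_ closed (by rw [closure_prod_eq]; exact mk_mem_prod hs ht)
  rintro ⟨_, _⟩ ⟨⟨ω, hω, rfl⟩, η, hη, rfl⟩
  exact hle ω hω η hη

theorem pn_tensorPull {P : Type*} [AddCommGroup P] [Module (L0 ν) P] [BanachMod ν P]
    {eP : M ⊗[L0 ν] N →ₗ[L0 ν] P} (hP : IsEpsTensor ν M N P eP)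
    {Q : Type*} [AddCommGroup Q] [Module (L0 μ) Q] [BanachMod μ Q]
    {eQ : Mp ⊗[L0 μ] Np →ₗ[L0 μ] Q} (hQ : IsEpsTensor μ Mp Np Q eQ) (α : M ⊗[L0 ν] N) :
    pn μ (eQ (tensorPull hpbM hpbN α)) = pullL0 hφ (pn ν (eP α)) := by
  apply le_antisymm
  · refine (hQ.pn_emb _).2 fun g hg => ?_
    obtain ⟨ω', η', hω', hη', rfl⟩ := mem_epsReps.1 hg
    exact abs_dualDistrib_tensorPull_le hpbM hpbN hω' hη' (hP.pn_emb α).1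
  · refine (isLUB_pullL0_image hφ (epsReps_nonempty α) (hP.pn_emb α)).2 ?_
    rintro _ ⟨g, hg, rfl⟩
    obtain ⟨ω, η, hω, hη, rfl⟩ := mem_epsReps.1 hg
    obtain ⟨ω', hω', hωω'⟩ := hpbM.exists_functional hω
    obtain ⟨η', hη', hηη'⟩ := hpbN.exists_functional hη
    refine (hQ.pn_emb _).1 (mem_epsReps.2 ⟨ω', η', hω', hη', ?_⟩)
    rw [dualDistrib_tensorPull hpbM hpbN hωω' hηη', pullL0_abs]

end Isometry

/-! ### Almost everywhere convergence -/

section AEConvergence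

variable {μ : Measure X} {ι κ : Type*} {l : Filter ι} {f g : ι → L0 μ}

/-- Almost everywhere convergence to `0` of a family in `L⁰(𝕏)`. Unlike convergence in `dL0`, it
is visibly compatible with multiplication by elements of `L⁰(𝕏)` and with composition. -/
def AETendstoZero (f : ι → L0 μ) (l : Filter ι) : Prop :=
  ∀ᵐ x ∂μ, Tendsto (fun i => f i x) l (nhds 0)

namespace AETendstoZero

theorem squeeze [Countable ι] (hg : AETendstoZero g l) (hf : ∀ i, 0 ≤ f i) (hfg : ∀ i, f i ≤ g i) :
    AETendstoZero f l := by
  filter_upwards [hg, ae_all_iff.2 fun i => AEEqFun.coeFn_le.2 (hf i),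
    ae_all_iff.2 fun i => AEEqFun.coeFn_le.2 (hfg i), AEEqFun.coeFn_zero (μ := μ) (β := ℝ)]
    with x hgx hfx hfgx h0
  exact squeeze_zero (fun i => h0.symm.trans_le (hfx i)) hfgx hgx

theorem add [Countable ι] (hf : AETendstoZero f l) (hg : AETendstoZero g l) :
    AETendstoZero (fun i => f i + g i) l := by
  filter_upwards [hf, hg, ae_all_iff.2 fun i => AEEqFun.coeFn_add (f i) (g i)] with x hfx hgx hx
  simpa only [hx, Pi.add_apply, add_zero] using hfx.add hgx

theorem const_mul [Countable ι] (hf : AETendstoZero f l) (a : L0 μ) :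
    AETendstoZero (fun i => a * f i) l := by
  filter_upwards [hf, ae_all_iff.2 fun i => AEEqFun.coeFn_mul a (f i)] with x hfx hx
  simpa only [hx, Pi.mul_apply, mul_zero] using hfx.const_mul (a x)

theorem comp (hf : AETendstoZero f l) {l' : Filter κ} {k : κ → ι} (hk : Tendsto k l' l) :
    AETendstoZero (f ∘ k) l' :=
  hf.mono fun _ hx => hx.comp hk

theorem eq_zero_of_abs_le [Countable ι] [l.NeBot] (hg : AETendstoZero g l) {a : L0 μ}
    (ha : ∀ i, |a| ≤ g i) : a = 0 := by
  apply AEEqFun.ext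
  filter_upwards [hg, ae_all_iff.2 fun i => AEEqFun.coeFn_le.2 (ha i), AEEqFun.coeFn_abs a,
    AEEqFun.coeFn_zero (μ := μ) (β := ℝ)] with x hgx hle habs h0
  rw [h0, Pi.zero_apply, ← abs_nonpos_iff, ← habs]
  exact ge_of_tendsto' hgx hle

theorem pull [Countable ι] {Y : Type*} [MeasurableSpace Y] {ν : Measure Y} {φ : X → Y}
    (hφ : Measure.QuasiMeasurePreserving φ μ ν) {f : ι → L0 ν} (hf : AETendstoZero f l) :
    AETendstoZero (fun i => pullL0 hφ (f i)) l := by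
  filter_upwards [hφ.ae hf, ae_all_iff.2 fun i => coeFn_pullL0 hφ (f i)] with x hfx hx
  simpa only [hx, Function.comp_apply] using hfx

end AETendstoZero

variable [SFinite μ]

theorem dL0_zero_right (a : L0 μ) : dL0 μ a 0 = ∫ x, min |a x| 1 ∂μ.toFinite := by
  refine integral_congr_ae ?_
  rw [EventuallyEq, ae_toFinite]
  filter_upwards [AEEqFun.coeFn_zero (α := X) (μ := μ) (β := ℝ)] with x h0
  rw [h0, Pi.zero_apply, sub_zero]

theorem aestronglyMeasurable_min_abs (a : L0 μ) :
    AEStronglyMeasurable (fun x => min |a x| 1) μ.toFinite :=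
  (a.measurable.abs.min measurable_const).aestronglyMeasurable

theorem norm_min_abs_one_le (r : ℝ) : ‖min |r| 1‖ ≤ 1 := by
  rw [Real.norm_of_nonneg (by positivity)]
  exact min_le_right _ _

theorem integrable_min_abs (a : L0 μ) : Integrable (fun x => min |a x| 1) μ.toFinite :=
  .of_bound (aestronglyMeasurable_min_abs a) 1 (ae_of_all _ fun _ => norm_min_abs_one_le _)

theorem dL0_zero_le_add {a b c : L0 μ} (ha : 0 ≤ a) (habc : a ≤ b + c) :
    dL0 μ a 0 ≤ dL0 μ b 0 + dL0 μ c 0 := by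
  simp only [dL0_zero_right]
  rw [← integral_add (integrable_min_abs b) (integrable_min_abs c)]
  refine integral_mono_ae (integrable_min_abs a)
    ((integrable_min_abs b).add (integrable_min_abs c)) ?_
  rw [EventuallyLE, ae_toFinite]
  filter_upwards [AEEqFun.coeFn_le.2 ha, AEEqFun.coeFn_le.2 habc, AEEqFun.coeFn_add b c,
    AEEqFun.coeFn_zero (μ := μ) (β := ℝ)] with x hax hle hadd h0
  rw [h0, Pi.zero_apply] at hax
  rw [hadd, Pi.add_apply] at hle
  have hle' : |a x| ≤ |b x| + |c x| := by
    rw [abs_of_nonneg hax]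
    exact hle.trans (add_le_add (le_abs_self _) (le_abs_self _))
  grind

theorem AETendstoZero.tendsto_dL0 [l.IsCountablyGenerated] (hf : AETendstoZero f l) :
    Tendsto (fun i => dL0 μ (f i) 0) l (nhds 0) := by
  simp only [dL0_zero_right]
  rw [← integral_zero X ℝ (μ := μ.toFinite)]
  refine tendsto_integral_filter_of_dominated_convergence (fun _ => 1)
    (.of_forall fun i => aestronglyMeasurable_min_abs (f i))
    (.of_forall fun i => ae_of_all _ fun x => norm_min_abs_one_le (f i x))
    (integrable_const _) ?_
  rw [ae_toFinite]
  filter_upwards [hf] with x hx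
  simpa only [abs_zero, zero_le_one, min_eq_left] using hx.abs.min (tendsto_const_nhds (x := 1))

theorem exists_seq_aeTendstoZero [l.NeBot] [l.IsCountablyGenerated]
    (hf : Tendsto (fun i => dL0 μ (f i) 0) l (nhds 0)) :
    ∃ k : ℕ → ι, Tendsto k atTop l ∧ AETendstoZero (f ∘ k) atTop := by
  have inMeasure : TendstoInMeasure μ.toFinite (fun i x => min |f i x| 1) l 0 := by
    refine tendstoInMeasure_of_tendsto_eLpNorm one_ne_zero
      (fun i => aestronglyMeasurable_min_abs (f i)) aestronglyMeasurable_const ?_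
    have eLpNorm_eq (i : ι) : eLpNorm ((fun x => min |f i x| 1) - 0) 1 μ.toFinite =
        ENNReal.ofReal (dL0 μ (f i) 0) := by
      rw [sub_zero, eLpNorm_one_eq_lintegral_enorm,
        ← ofReal_integral_norm_eq_lintegral_enorm (integrable_min_abs (f i)), dL0_zero_right]
      congr! 3 with x
      exact Real.norm_of_nonneg (by positivity)
    simpa only [eLpNorm_eq, ENNReal.ofReal_zero] using ENNReal.tendsto_ofReal hf
  obtain ⟨k, hk, hfk⟩ := inMeasure.exists_seq_tendsto_ae'
  refine ⟨k, hk, ?_⟩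
  rw [ae_toFinite] at hfk
  filter_upwards [hfk] with x hx
  have small : ∀ᶠ n in atTop, min |f (k n) x| 1 = |f (k n) x| :=
    (hx.eventually_lt_const one_pos).mono fun n hn =>
      min_eq_left ((min_lt_iff.1 hn).resolve_right (lt_irrefl 1)).le
  exact (tendsto_zero_iff_abs_tendsto_zero _).2 (hx.congr' small)

end AEConvergence

section ModuleConvergence

variable {μ : Measure X} [SFinite μ] {M : Type*} [AddCommGroup M] [Module (L0 μ) M]
  [BanachMod μ M] {ι : Type*} {l : Filter ι} {u u' : ι → M} {v v' : M}

variable (μ) in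
/-- Almost everywhere convergence `|uᵢ - v| → 0` in a Banach `L⁰(𝕏)`-module. -/
def AETendsto (u : ι → M) (l : Filter ι) (v : M) : Prop :=
  AETendstoZero (fun i => pn μ (u i - v)) l

theorem exists_seq_aeTendsto [l.NeBot] [l.IsCountablyGenerated]
    (h : Tendsto (fun i => dM μ (u i) v) l (nhds 0)) :
    ∃ k : ℕ → ι, Tendsto k atTop l ∧ AETendsto μ (u ∘ k) atTop v :=
  exists_seq_aeTendstoZero (f := fun i => pn μ (u i - v)) h

theorem exists_seq_aeTendsto_of_dM_lt (h : ∀ ε : ℝ, 0 < ε → ∃ i, dM μ (u i) v < ε) :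
    ∃ k : ℕ → ι, AETendsto μ (u ∘ k) atTop v := by
  choose k hk using fun n : ℕ => h (1 / (n + 1)) Nat.one_div_pos_of_nat
  have tendsto : Tendsto (fun n => dM μ (u (k n)) v) atTop (nhds 0) :=
    squeeze_zero (fun n => integral_nonneg fun x => by positivity) (fun n => (hk n).le)
      tendsto_one_div_add_atTop_nhds_zero_nat
  obtain ⟨j, -, hj⟩ := exists_seq_aeTendsto tendsto
  exact ⟨k ∘ j, hj⟩

theorem dM_triangle (u v w : M) : dM μ u w ≤ dM μ u v + dM μ v w := by
  unfold dM
  exact dL0_zero_le_add (pn_nonneg _) (isPointwiseSeminorm_pn.sub_le_add_sub u v w)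

theorem exists_aeTendsto_of_cauchy {u : ℕ → M}
    (hu : AETendstoZero (fun i : ℕ × ℕ => pn μ (u i.1 - u i.2)) (atTop ×ˢ atTop)) :
    ∃ v, AETendsto μ u atTop v := by
  have cauchy (ε : ℝ) (hε : 0 < ε) :
      ∃ N : ℕ, ∀ m ≥ N, ∀ n ≥ N, dL0 μ (pn μ (u m - u n)) 0 < ε := by
    have small := hu.tendsto_dL0.eventually_lt_const hε
    rw [prod_atTop_atTop_eq] at small
    obtain ⟨⟨a, b⟩, hab⟩ := eventually_atTop.1 small
    exact ⟨max a b, fun m hm n hn => hab (m, n)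
      ⟨(le_max_left _ _).trans hm, (le_max_right _ _).trans hn⟩⟩
  obtain ⟨v, hv⟩ := BanachMod.complete u cauchy
  obtain ⟨k, hk, hkv⟩ := exists_seq_aeTendsto (v := v) (u := u) (μ := μ) hv
  have diag : Tendsto (fun n => (n, k n)) atTop (atTop ×ˢ atTop) := tendsto_id.prodMk hk
  exact ⟨v, ((hu.comp diag).add hkv).squeeze (fun _ => pn_nonneg _) fun n =>
    isPointwiseSeminorm_pn.sub_le_add_sub (u n) (u (k n)) v⟩

namespace AETendsto

theorem cauchy {u : ℕ → M} (hu : AETendsto μ u atTop v) :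
    AETendstoZero (fun i : ℕ × ℕ => pn μ (u i.1 - u i.2)) (atTop ×ˢ atTop) := by
  refine ((hu.comp tendsto_fst).add (hu.comp tendsto_snd)).squeeze (fun _ => pn_nonneg _)
    fun i => ?_
  rw [Function.comp_apply, Function.comp_apply, isPointwiseSeminorm_pn.map_sub_rev (u i.2)]
  exact isPointwiseSeminorm_pn.sub_le_add_sub _ _ _

theorem exists_dM_lt [l.NeBot] [l.IsCountablyGenerated] (hu : AETendsto μ u l v) {ε : ℝ}
    (hε : 0 < ε) : ∃ i, dM μ (u i) v < ε :=
  ((AETendstoZero.tendsto_dL0 hu).eventually_lt_const hε).exists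

theorem const (v : M) : AETendsto μ (fun _ : ι => v) l v := by
  filter_upwards [AEEqFun.coeFn_zero (μ := μ) (β := ℝ)] with x h0
  simpa only [sub_self, pn_zero, h0, Pi.zero_apply] using tendsto_const_nhds

theorem unique [Countable ι] [l.NeBot] (hv : AETendsto μ u l v) (hv' : AETendsto μ u l v') :
    v = v' := by
  refine sub_eq_zero.1 ((BanachMod.pn_eq_zero (μ := μ) _).1
    ((AETendstoZero.add hv hv').eq_zero_of_abs_le fun i => ?_))
  change |pn μ (v - v')| ≤ _
  rw [abs_of_nonneg (pn_nonneg _), isPointwiseSeminorm_pn.map_sub_rev (u i) v]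
  exact isPointwiseSeminorm_pn.sub_le_add_sub _ _ _

theorem add_add [Countable ι] (hu : AETendsto μ u l v) (hu' : AETendsto μ u' l v') :
    AETendsto μ (u + u') l (v + v') :=
  (AETendstoZero.add hu hu').squeeze (fun _ => pn_nonneg _) fun i => by
    rw [Pi.add_apply, add_sub_add_comm]
    exact isPointwiseSeminorm_pn.add_le _ _

theorem const_smul [Countable ι] (hu : AETendsto μ u l v) (a : L0 μ) :
    AETendsto μ (a • u) l (a • v) := by
  simpa only [AETendsto, Pi.smul_apply, ← smul_sub, isPointwiseSeminorm_pn.smul]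
    using AETendstoZero.const_mul hu |a|

theorem map_of_le [Countable ι] {Y : Type*} [MeasurableSpace Y] {ν : Measure Y} [SFinite ν]
    {φ : X → Y} (hφ : Measure.QuasiMeasurePreserving φ μ ν)
    {P : Type*} [AddCommGroup P] [Module (L0 ν) P] [BanachMod ν P]
    {Q : Type*} [AddCommGroup Q] [Module (L0 μ) Q] [BanachMod μ Q]
    {Ψ : P →+ Q} {g : L0 μ} (hΨ : ∀ p, pn μ (Ψ p) ≤ g * pullL0 hφ (pn ν p))
    {u : ι → P} {p : P} (hu : AETendsto ν u l p) : AETendsto μ (Ψ ∘ u) l (Ψ p) :=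
  ((AETendstoZero.pull hφ hu).const_mul g).squeeze (fun _ => pn_nonneg _) fun i => by
    rw [Function.comp_apply, ← map_sub]
    exact hΨ _

end AETendsto

end ModuleConvergence

/-! ### Extension by density -/

section Extension

variable {Y : Type*} [MeasurableSpace Y] {μ : Measure X} [SFinite μ] {ν : Measure Y} [SFinite ν]
  {φ : X → Y} {hφ : Measure.QuasiMeasurePreserving φ μ ν}
  {A : Type*} [AddCommGroup A] [Module (L0 ν) A]
  {P : Type*} [AddCommGroup P] [Module (L0 ν) P] [BanachMod ν P]
  {Q : Type*} [AddCommGroup Q] [Module (L0 μ) Q] [BanachMod μ Q]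
  {p p' : P} {q q' : Q} {e : A →ₗ[L0 ν] P} {T : A →ₛₗ[pullRingHom hφ] Q}

/-- The extension of `T` along `e` by density, as a relation: `q` is the limit of `T aₙ` for some
sequence `aₙ` such that `e aₙ` converges to `p`. -/
def IsLimitValue (e : A →ₗ[L0 ν] P) (T : A →ₛₗ[pullRingHom hφ] Q) (p : P) (q : Q) : Prop :=
  ∃ a : ℕ → A, AETendsto ν (e ∘ a) atTop p ∧ AETendsto μ (T ∘ a) atTop q

namespace IsLimitValue

theorem of_apply (e : A →ₗ[L0 ν] P) (T : A →ₛₗ[pullRingHom hφ] Q) (a : A) :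
    IsLimitValue e T (e a) (T a) :=
  ⟨fun _ => a, .const _, .const _⟩

theorem add (h : IsLimitValue e T p q) (h' : IsLimitValue e T p' q') :
    IsLimitValue e T (p + p') (q + q') := by
  obtain ⟨a, hp, hq⟩ := h
  obtain ⟨a', hp', hq'⟩ := h'
  refine ⟨a + a', ?_, ?_⟩
  · convert hp.add_add hp'
    exact funext fun n => map_add e _ _
  · convert hq.add_add hq'
    exact funext fun n => map_add T _ _

theorem smul (h : IsLimitValue e T p q) (f : L0 ν) :
    IsLimitValue e T (f • p) (pullL0 hφ f • q) := by
  obtain ⟨a, hp, hq⟩ := h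
  refine ⟨f • a, ?_, ?_⟩
  · convert hp.const_smul f
    exact funext fun n => map_smul e _ _
  · convert hq.const_smul (pullL0 hφ f)
    exact funext fun n => map_smulₛₗ T _ _

theorem sub (h : IsLimitValue e T p q) (h' : IsLimitValue e T p' q') :
    IsLimitValue e T (p - p') (q - q') := by
  have key := h.add (h'.smul (-1))
  have pull_neg_one : pullL0 hφ (-1) = -1 :=
    (map_neg (pullRingHom hφ) 1).trans (congrArg _ (map_one _))
  rwa [pull_neg_one, neg_one_smul, neg_one_smul, ← sub_eq_add_neg, ← sub_eq_add_neg] at key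

theorem pn_eq (hT : ∀ a, pn μ (T a) = pullL0 hφ (pn ν (e a)))
    (h : IsLimitValue e T p q) : pn μ q = pullL0 hφ (pn ν p) := by
  obtain ⟨a, hp, hq⟩ := h
  refine sub_eq_zero.1 ((AETendstoZero.add hq (hp.pull hφ)).eq_zero_of_abs_le fun n => ?_)
  calc |pn μ q - pullL0 hφ (pn ν p)|
      = |(pn μ q - pn μ (T (a n))) + pullL0 hφ (pn ν (e (a n)) - pn ν p)| := by
        rw [hT, pullL0_sub, sub_add_sub_cancel]
    _ ≤ |pn μ q - pn μ (T (a n))| + |pullL0 hφ (pn ν (e (a n)) - pn ν p)| := abs_add_le _ _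
    _ ≤ pn μ (T (a n) - q) + pullL0 hφ (pn ν (e (a n) - p)) := by
        rw [← pullL0_abs, isPointwiseSeminorm_pn.map_sub_rev]
        exact add_le_add (isPointwiseSeminorm_pn.abs_sub_le _ _)
          (pullL0_mono hφ (isPointwiseSeminorm_pn.abs_sub_le _ _))

theorem unique (hT : ∀ a, pn μ (T a) = pullL0 hφ (pn ν (e a)))
    (h : IsLimitValue e T p q) (h' : IsLimitValue e T p q') : q = q' := by
  refine sub_eq_zero.1 ((BanachMod.pn_eq_zero (μ := μ) _).1 ?_)
  change pn μ (q - q') = 0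
  rw [(h.sub h').pn_eq hT, sub_self, pn_zero]
  rfl

theorem exists_of_dense (hT : ∀ a, pn μ (T a) = pullL0 hφ (pn ν (e a)))
    (hdense : ∀ p : P, ∀ ε : ℝ, 0 < ε → ∃ a, dM ν (e a) p < ε) (p : P) :
    ∃ q, IsLimitValue e T p q := by
  obtain ⟨a, ha⟩ := exists_seq_aeTendsto_of_dM_lt (hdense p)
  obtain ⟨q, hq⟩ : ∃ q, AETendsto μ (T ∘ a) atTop q := by
    refine exists_aeTendsto_of_cauchy ?_
    simpa only [Function.comp_apply, ← map_sub, hT] using ha.cauchy.pull hφ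
  exact ⟨q, a, ha, hq⟩

end IsLimitValue

theorem exists_isometric_extension (hT : ∀ a, pn μ (T a) = pullL0 hφ (pn ν (e a)))
    (hdense : ∀ p : P, ∀ ε : ℝ, 0 < ε → ∃ a, dM ν (e a) p < ε) :
    ∃ Φ : P →ₛₗ[pullRingHom hφ] Q,
      (∀ a, Φ (e a) = T a) ∧ ∀ p, pn μ (Φ p) = pullL0 hφ (pn ν p) := by
  choose Φ hΦ using IsLimitValue.exists_of_dense hT hdense
  refine ⟨{ toFun := Φ, map_add' := fun p p' => ?_, map_smul' := fun f p => ?_ }, fun a => ?_,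
    fun p => (hΦ p).pn_eq hT⟩
  · exact (hΦ _).unique hT ((hΦ p).add (hΦ p'))
  · exact (hΦ _).unique hT ((hΦ p).smul f)
  · exact (hΦ _).unique hT (.of_apply e T a)

theorem eq_of_eqOn_dense {ι : Type*} {i : ι → P} {Φ Ψ : P →+ Q} {g g' : L0 μ}
    (hΦ : ∀ p, pn μ (Φ p) ≤ g * pullL0 hφ (pn ν p))
    (hΨ : ∀ p, pn μ (Ψ p) ≤ g' * pullL0 hφ (pn ν p))
    (hdense : ∀ p : P, ∀ ε : ℝ, 0 < ε → ∃ a, dM ν (i a) p < ε)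
    (heq : ∀ a, Φ (i a) = Ψ (i a)) : Φ = Ψ := by
  ext p
  obtain ⟨a, ha⟩ := exists_seq_aeTendsto_of_dM_lt (hdense p)
  refine (ha.map_of_le hφ hΦ).unique (l := atTop) ?_
  convert ha.map_of_le hφ hΨ using 1
  exact funext fun n => heq (a n)

end Extension

/-! ### Density of the generated module -/

section Closure

variable {μ : Measure X} [SFinite μ] {M : Type*} [AddCommGroup M] [Module (L0 μ) M]
  [BanachMod μ M] {N : Type*} [AddCommGroup N] [Module (L0 μ) N] [BanachMod μ N]
  {P : Type*} [AddCommGroup P] [Module (L0 μ) P] [BanachMod μ P]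
  {K K' : Submodule (L0 μ) M} {L : Submodule (L0 μ) N} {v : M}

/-- The closure of a submodule, described by almost everywhere convergent sequences so that the
module operations visibly preserve it; `mem_aeClosure` compares it with the distance `dM`. -/
def aeClosure (K : Submodule (L0 μ) M) : Submodule (L0 μ) M where
  carrier := {v | ∃ u : ℕ → M, (∀ n, u n ∈ K) ∧ AETendsto μ u atTop v}
  zero_mem' := ⟨fun _ => 0, fun _ => K.zero_mem, .const 0⟩
  add_mem' := fun ⟨u, hu, huv⟩ ⟨u', hu', huv'⟩ =>
    ⟨u + u', fun n => K.add_mem (hu n) (hu' n), huv.add_add huv'⟩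
  smul_mem' := fun a _ ⟨u, hu, huv⟩ => ⟨a • u, fun n => K.smul_mem a (hu n), huv.const_smul a⟩

theorem mem_aeClosure : v ∈ aeClosure K ↔ ∀ ε : ℝ, 0 < ε → ∃ w ∈ K, dM μ w v < ε := by
  constructor
  · rintro ⟨u, hu, huv⟩ ε hε
    obtain ⟨n, hn⟩ := huv.exists_dM_lt hε
    exact ⟨u n, hu n, hn⟩
  · intro h
    obtain ⟨k, hk⟩ := exists_seq_aeTendsto_of_dM_lt (u := ((↑) : K → M)) fun ε hε =>
      let ⟨w, hw, hwv⟩ := h ε hε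
      ⟨⟨w, hw⟩, hwv⟩
    exact ⟨_, fun n => (k n).2, hk⟩

theorem le_aeClosure (K : Submodule (L0 μ) M) : K ≤ aeClosure K := fun v hv =>
  ⟨fun _ => v, fun _ => hv, .const v⟩

theorem aeClosure_mono (h : K ≤ K') : aeClosure K ≤ aeClosure K' := fun _ ⟨u, hu, huv⟩ =>
  ⟨u, fun n => h (hu n), huv⟩

theorem aeClosure_le_aeClosure (h : K ≤ aeClosure K') : aeClosure K ≤ aeClosure K' := by
  refine fun v hv => mem_aeClosure.2 fun ε hε => ?_
  obtain ⟨w, hw, hwv⟩ := mem_aeClosure.1 hv (ε / 2) (half_pos hε)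
  obtain ⟨w', hw', hww'⟩ := mem_aeClosure.1 (h hw) (ε / 2) (half_pos hε)
  exact ⟨w', hw', by linarith [dM_triangle (μ := μ) w' w v]⟩

theorem IsHom.aeClosure_le_comap {T : M →ₗ[L0 μ] N} (hT : IsHom μ T)
    (h : K ≤ (aeClosure L).comap T) : aeClosure K ≤ (aeClosure L).comap T := by
  rintro v ⟨u, hu, huv⟩
  obtain ⟨g, -, hg⟩ := hT
  have tendsto : AETendsto μ (T ∘ u) atTop (T v) :=
    huv.map_of_le (.id μ) (Ψ := T.toAddMonoidHom) fun p => (pullL0_id (pn μ p)).symm ▸ hg p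
  exact aeClosure_le_aeClosure le_rfl ⟨_, fun n => h (hu n), tendsto⟩

namespace IsEpsTensor

variable {e : M ⊗[L0 μ] N →ₗ[L0 μ] P}

theorem isHom_tmul_right (he : IsEpsTensor μ M N P e) (v : M) :
    IsHom μ (e ∘ₗ TensorProduct.mk (L0 μ) M N v) :=
  ⟨pn μ v, pn_nonneg v, fun w => he.pn_tmul_le v w⟩

theorem isHom_tmul_left (he : IsEpsTensor μ M N P e) (w : N) :
    IsHom μ (e ∘ₗ (TensorProduct.mk (L0 μ) M N).flip w) :=
  ⟨pn μ w, pn_nonneg w, fun v => (he.pn_tmul_le v w).trans_eq (mul_comm _ _)⟩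

theorem aeClosure_span_tmul (he : IsEpsTensor μ M N P e) {s : Set M} {t : Set N}
    (hs : aeClosure (Submodule.span (L0 μ) s) = ⊤) (ht : aeClosure (Submodule.span (L0 μ) t) = ⊤) :
    aeClosure (Submodule.span (L0 μ) (image2 (fun v w => e (v ⊗ₜ w)) s t)) = ⊤ := by
  set C := aeClosure (Submodule.span (L0 μ) (image2 (fun v w => e (v ⊗ₜ w)) s t))
  have left (v) (hv : v ∈ s) (w : N) : e (v ⊗ₜ w) ∈ C := by
    refine (he.isHom_tmul_right v).aeClosure_le_comap (Submodule.span_le.2 fun w hw => ?_)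
      (ht ▸ Submodule.mem_top : w ∈ aeClosure (Submodule.span (L0 μ) t))
    exact le_aeClosure _ (Submodule.subset_span (mem_image2_of_mem hv hw))
  have tmul (v : M) (w : N) : e (v ⊗ₜ w) ∈ C :=
    (he.isHom_tmul_left w).aeClosure_le_comap (Submodule.span_le.2 fun v hv => left v hv w)
      (hs ▸ Submodule.mem_top : v ∈ aeClosure (Submodule.span (L0 μ) s))
  have range_le : LinearMap.range e ≤ C := by
    rintro _ ⟨α, rfl⟩
    induction α with
    | zero => exact e.map_zero ▸ C.zero_mem
    | tmul v w => exact tmul v w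
    | add α β hα hβ => exact e.map_add α β ▸ C.add_mem hα hβ
  refine eq_top_iff.2 fun p _ => aeClosure_le_aeClosure range_le (mem_aeClosure.2 fun ε hε => ?_)
  obtain ⟨α, hα⟩ := he.dense p ε hε
  exact ⟨_, ⟨α, rfl⟩, hα⟩

end IsEpsTensor

end Closure

theorem IsPullback.aeClosure_span_range {Y : Type*} [MeasurableSpace Y] {μ : Measure X} [SFinite μ]
    {ν : Measure Y} [SFinite ν] {φ : X → Y} {hφ : Measure.QuasiMeasurePreserving φ μ ν}
    {M : Type*} [AddCommGroup M] [Module (L0 ν) M] [BanachMod ν M]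
    {Mp : Type*} [AddCommGroup Mp] [Module (L0 μ) Mp] [BanachMod μ Mp] {pb : M → Mp}
    (hpb : IsPullback μ ν φ hφ M Mp pb) : aeClosure (Submodule.span (L0 μ) (range pb)) = ⊤ :=
  eq_top_iff.2 fun u _ => mem_aeClosure.2 (hpb.dense u)

theorem pullback_commutes_with_injective_tensor_general
    {Y : Type*} [MeasurableSpace Y] (μ : Measure X) [SFinite μ] (ν : Measure Y) [SFinite ν]
    (φ : X → Y) (hφ : Measure.QuasiMeasurePreserving φ μ ν)
    (M : Type*) [AddCommGroup M] [Module (L0 ν) M] [BanachMod ν M]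
    (N : Type*) [AddCommGroup N] [Module (L0 ν) N] [BanachMod ν N]
    (Mp : Type*) [AddCommGroup Mp] [Module (L0 μ) Mp] [BanachMod μ Mp]
    (Np : Type*) [AddCommGroup Np] [Module (L0 μ) Np] [BanachMod μ Np]
    (pbM : M → Mp) (hpbM : IsPullback μ ν φ hφ M Mp pbM)
    (pbN : N → Np) (hpbN : IsPullback μ ν φ hφ N Np pbN)
    (P : Type*) [AddCommGroup P] [Module (L0 ν) P] [BanachMod ν P]
    (eP : M ⊗[L0 ν] N →ₗ[L0 ν] P) (hP : IsEpsTensor ν M N P eP)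
    (Q : Type*) [AddCommGroup Q] [Module (L0 μ) Q] [BanachMod μ Q]
    (eQ : Mp ⊗[L0 μ] Np →ₗ[L0 μ] Q) (hQ : IsEpsTensor μ Mp Np Q eQ) :
    ∃ Φ : P → Q,
      ((∀ p q : P, Φ (p + q) = Φ p + Φ q)
        ∧ (∀ (f : L0 ν) (p : P), Φ (f • p) = pullL0 hφ f • Φ p)
        ∧ (∃ g : L0 μ, 0 ≤ g ∧ ∀ p : P, pn μ (Φ p) ≤ g * pullL0 hφ (pn ν p))
        ∧ (∀ (v : M) (w : N), Φ (eP (v ⊗ₜ[L0 ν] w)) = eQ (pbM v ⊗ₜ[L0 μ] pbN w)))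
      ∧ (∀ Φ' : P → Q,
          ((∀ p q : P, Φ' (p + q) = Φ' p + Φ' q)
            ∧ (∀ (f : L0 ν) (p : P), Φ' (f • p) = pullL0 hφ f • Φ' p)
            ∧ (∃ g : L0 μ, 0 ≤ g ∧ ∀ p : P, pn μ (Φ' p) ≤ g * pullL0 hφ (pn ν p))
            ∧ (∀ (v : M) (w : N), Φ' (eP (v ⊗ₜ[L0 ν] w)) = eQ (pbM v ⊗ₜ[L0 μ] pbN w))) →
          Φ' = Φ)
      ∧ (∀ p : P, pn μ (Φ p) = pullL0 hφ (pn ν p))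
      ∧ IsPullback μ ν φ hφ P Q Φ := by
  obtain ⟨Φ, hΦ, isometry⟩ := exists_isometric_extension
    (T := eQ ∘ₛₗ tensorPull hpbM hpbN) (pn_tensorPull hpbM hpbN hP hQ) hP.dense
  have tmul (v : M) (w : N) : Φ (eP (v ⊗ₜ w)) = eQ (pbM v ⊗ₜ pbN w) := hΦ (v ⊗ₜ w)
  have bound (p : P) : pn μ (Φ p) ≤ 1 * pullL0 hφ (pn ν p) := by rw [isometry, one_mul]
  have dense : aeClosure (Submodule.span (L0 μ) (range Φ)) = ⊤ := by
    refine top_le_iff.1 ((hQ.aeClosure_span_tmul hpbM.aeClosure_span_range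
      hpbN.aeClosure_span_range).ge.trans (aeClosure_mono (Submodule.span_mono ?_)))
    rintro _ ⟨_, ⟨v, rfl⟩, _, ⟨w, rfl⟩, rfl⟩
    exact ⟨_, tmul v w⟩
  refine ⟨Φ, ⟨map_add Φ, map_smulₛₗ Φ, ⟨1, zero_le_one, bound⟩, tmul⟩, ?_, isometry,
    map_add Φ, map_smulₛₗ Φ, isometry, fun q => mem_aeClosure.1 (dense ▸ Submodule.mem_top)⟩
  rintro Φ' ⟨add, -, ⟨g, -, bound'⟩, tmul'⟩
  have agree (α : M ⊗[L0 ν] N) : AddMonoidHom.mk' Φ' add (eP α) = Φ (eP α) := by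
    induction α with
    | zero => simp only [map_zero]
    | tmul v w => exact (tmul' v w).trans (tmul v w).symm
    | add α β hα hβ => simp only [map_add, hα, hβ]
  exact congrArg DFunLike.coe (eq_of_eqOn_dense (Φ := AddMonoidHom.mk' Φ' add)
    (Ψ := Φ.toAddMonoidHom) bound' bound hP.dense agree)

/-- Let `𝕏`, `𝕐` be separable σ-finite measure spaces and `φ : X → Y`
measurable with `φ_# 𝔪_X ≪ 𝔪_Y`. Let `ℳ`, `𝒩` be Banach `L⁰(𝕐)`-modules. Then there is a
unique homomorphism `φ* : ℳ ⊗̂_ε 𝒩 → (φ*ℳ) ⊗̂_ε (φ*𝒩)` with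
`φ*(v ⊗ w) = (φ*v) ⊗ (φ*w)`; it satisfies `|φ* α| = |α| ∘ φ` and its image generates the
target, so that the injective tensor product of the pullbacks, together with `φ*`, is a
realization of the pullback of the injective tensor product. Here `P` realizes the injective
tensor product of `ℳ` and `𝒩` over `𝕐`, while `Q` realizes that of the pullbacks `Mp`,
`Np` over `𝕏`. -/
theorem pullback_commutes_with_injective_tensor
    {Y : Type*} [MeasurableSpace Y] (μ : Measure X) [SigmaFinite μ]
    (ν : Measure Y) [SigmaFinite ν] (hμsep : MeasSeparable μ) (hνsep : MeasSeparable ν)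
    (φ : X → Y) (hφ : Measure.QuasiMeasurePreserving φ μ ν)
    (M : Type*) [AddCommGroup M] [Module (L0 ν) M] [BanachMod ν M]
    (N : Type*) [AddCommGroup N] [Module (L0 ν) N] [BanachMod ν N]
    (Mp : Type*) [AddCommGroup Mp] [Module (L0 μ) Mp] [BanachMod μ Mp]
    (Np : Type*) [AddCommGroup Np] [Module (L0 μ) Np] [BanachMod μ Np]
    (pbM : M → Mp) (hpbM : IsPullback μ ν φ hφ M Mp pbM)
    (pbN : N → Np) (hpbN : IsPullback μ ν φ hφ N Np pbN)
    (P : Type*) [AddCommGroup P] [Module (L0 ν) P] [BanachMod ν P]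
    (eP : M ⊗[L0 ν] N →ₗ[L0 ν] P) (hP : IsEpsTensor ν M N P eP)
    (Q : Type*) [AddCommGroup Q] [Module (L0 μ) Q] [BanachMod μ Q]
    (eQ : Mp ⊗[L0 μ] Np →ₗ[L0 μ] Q) (hQ : IsEpsTensor μ Mp Np Q eQ) :
    ∃ Φ : P → Q,
      ((∀ p q : P, Φ (p + q) = Φ p + Φ q)
        ∧ (∀ (f : L0 ν) (p : P), Φ (f • p) = pullL0 hφ f • Φ p)
        ∧ (∃ g : L0 μ, 0 ≤ g ∧ ∀ p : P, pn μ (Φ p) ≤ g * pullL0 hφ (pn ν p))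
        ∧ (∀ (v : M) (w : N), Φ (eP (v ⊗ₜ[L0 ν] w)) = eQ (pbM v ⊗ₜ[L0 μ] pbN w)))
      ∧ (∀ Φ' : P → Q,
          ((∀ p q : P, Φ' (p + q) = Φ' p + Φ' q)
            ∧ (∀ (f : L0 ν) (p : P), Φ' (f • p) = pullL0 hφ f • Φ' p)
            ∧ (∃ g : L0 μ, 0 ≤ g ∧ ∀ p : P, pn μ (Φ' p) ≤ g * pullL0 hφ (pn ν p))
            ∧ (∀ (v : M) (w : N), Φ' (eP (v ⊗ₜ[L0 ν] w)) = eQ (pbM v ⊗ₜ[L0 μ] pbN w))) →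
          Φ' = Φ)
      ∧ (∀ p : P, pn μ (Φ p) = pullL0 hφ (pn ν p))
      ∧ IsPullback μ ν φ hφ P Q Φ :=
  pullback_commutes_with_injective_tensor_general μ ν φ hφ M N Mp Np pbM hpbM pbN hpbN P eP hP Q eQ
    hQ

end Paper
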